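/- arXiv:2008.05709 — 7 statements merged into one kernel-verified Lean document; each statement's English description precedes it below -/
import Mathlib

section
/- For every μ ∈ ℝ and every ω ∈ ℂ with |ω| = 1 and 2 + iμ(1 − ω) ≠ 0, one has |(2ω + iμ(ω − 1)) / (2 + iμ(1 − ω))| ≤ √(1 + μ²) + |μ|. (Equivalently: the Möbius transformation ω ↦ ω·(1 + (iμ/2)(1 − ω⁻¹)) / (1 + (iμ/2)(1 − ω)) maps the unit circle into the closed disk of radius √(1+μ²) + |μ|.) -/
/-!
Write `f ω` for the quotient to be bounded. Since
`f ω + iμ = (1 + iμ) · ((2 - iμ) ω + iμ) / ((2 + iμ) - iμ ω)`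
and the last factor is a Blaschke-type quotient `(conj a * ω + conj b) / (a + b * ω)` with
`‖b‖ < ‖a‖`, of modulus at most `1` on the closed unit disk, `f` maps that disk into the disk with
centre `-iμ` and radius `‖1 + iμ‖ = √(1 + μ²)`. No point of the latter is farther than
`√(1 + μ²) + |μ|` from `0`.
-/

section Blaschke

open scoped ComplexConjugate

variable {𝕜 : Type*} [RCLike 𝕜]

theorem norm_add_mul_sq_sub_norm_conj_mul_add_conj_sq (a b z : 𝕜) :
    ‖a + b * z‖ ^ 2 - ‖conj a * z + conj b‖ ^ 2 = (‖a‖ ^ 2 - ‖b‖ ^ 2) * (1 - ‖z‖ ^ 2) := by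
  apply RCLike.ofReal_injective (K := 𝕜)
  push_cast
  simp only [← RCLike.mul_conj, map_add, map_mul, RCLike.conj_conj]
  ring

theorem norm_conj_mul_add_conj_le_norm_add_mul {a b z : 𝕜} (hba : ‖b‖ ≤ ‖a‖) (hz : ‖z‖ ≤ 1) :
    ‖conj a * z + conj b‖ ≤ ‖a + b * z‖ := by
  refine le_of_sq_le_sq (sub_nonneg.mp ?_) (norm_nonneg _)
  rw [norm_add_mul_sq_sub_norm_conj_mul_add_conj_sq]
  have hba_sq : ‖b‖ ^ 2 ≤ ‖a‖ ^ 2 := by gcongr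
  have hz_sq : ‖z‖ ^ 2 ≤ 1 := pow_le_one₀ (norm_nonneg z) hz
  exact mul_nonneg (sub_nonneg.mpr hba_sq) (sub_nonneg.mpr hz_sq)

end Blaschke

theorem add_mul_ne_zero_of_norm_lt_norm {R : Type*} [NonUnitalSeminormedRing R] {a b z : R}
    (hba : ‖b‖ < ‖a‖) (hz : ‖z‖ ≤ 1) : a + b * z ≠ 0 := by
  intro h
  refine hba.not_ge ?_
  calc ‖a‖ = ‖b * z‖ := by rw [eq_neg_of_add_eq_zero_left h, norm_neg]
    _ ≤ ‖b‖ * ‖z‖ := norm_mul_le b z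
    _ ≤ ‖b‖ := mul_le_of_le_one_right (norm_nonneg b) hz

section Mobius

open Complex

theorem norm_neg_I_mul_ofReal_lt_norm_two_add (μ : ℝ) : ‖-(I * (μ : ℂ))‖ < ‖2 + I * (μ : ℂ)‖ := by
  have h : |(2 + I * (μ : ℂ)).im| < ‖2 + I * (μ : ℂ)‖ := abs_im_lt_norm.mpr (by simp)
  simpa using h

theorem mobius_mem_closedBall (μ : ℝ) {ω : ℂ} (hω : ‖ω‖ ≤ 1) :
    (2 * ω + I * (μ : ℂ) * (ω - 1)) / (2 + I * (μ : ℂ) * (1 - ω)) ∈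
      Metric.closedBall (-(I * (μ : ℂ))) √(1 + μ ^ 2) := by
  have hlt := norm_neg_I_mul_ofReal_lt_norm_two_add μ
  have hden_eq : 2 + I * (μ : ℂ) * (1 - ω) = (2 + I * μ) + -(I * μ) * ω := by ring
  have hden : (2 + I * μ) + -(I * μ) * ω ≠ 0 := add_mul_ne_zero_of_norm_lt_norm hlt hω
  have hblaschke : ‖(2 - I * μ) * ω + I * μ‖ ≤ ‖(2 + I * μ) + -(I * μ) * ω‖ := by
    simpa [sub_eq_add_neg, conj_ofNat] using norm_conj_mul_add_conj_le_norm_add_mul hlt.le hω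
  have hradius : ‖1 + I * (μ : ℂ)‖ = √(1 + μ ^ 2) := by
    simpa [mul_comm] using norm_add_mul_I 1 μ
  have hfactor : (2 * ω + I * μ * (ω - 1)) / ((2 + I * μ) + -(I * μ) * ω) - -(I * μ) =
      (1 + I * μ) * (((2 - I * μ) * ω + I * μ) / ((2 + I * μ) + -(I * μ) * ω)) := by
    rw [sub_neg_eq_add, div_add' _ _ _ hden, mul_div_assoc']
    congr 1
    ring
  rw [mem_closedBall_iff_norm, hden_eq, hfactor, norm_mul, hradius, norm_div]
  exact mul_le_of_le_one_right (Real.sqrt_nonneg _) (div_le_one_of_le₀ hblaschke (norm_nonneg _))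

theorem mobius_unit_circle_bound_general (μ : ℝ) {ω : ℂ} (hω : ‖ω‖ ≤ 1) :
    ‖(2 * ω + I * (μ : ℂ) * (ω - 1)) / (2 + I * (μ : ℂ) * (1 - ω))‖ ≤ √(1 + μ ^ 2) + |μ| := by
  have hcentre : ‖-(I * (μ : ℂ))‖ = |μ| := by simp
  rw [add_comm √_, ← hcentre]
  exact norm_le_norm_add_const_of_dist_le (mobius_mem_closedBall μ hω)

end Mobius

/-- For every `μ ∈ ℝ` and `ω ∈ ℂ` with `|ω| = 1` and
`2 + iμ(1 − ω) ≠ 0`, one has `|(2ω + iμ(ω − 1)) / (2 + iμ(1 − ω))| ≤ √(1 + μ²) + |μ|`. -/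
theorem mobius_unit_circle_bound
    (μ : ℝ) (ω : ℂ) (hω : ‖ω‖ = 1)
    (hden : 2 + Complex.I * (μ : ℂ) * (1 - ω) ≠ 0) :
    ‖(2 * ω + Complex.I * (μ : ℂ) * (ω - 1)) /
        (2 + Complex.I * (μ : ℂ) * (1 - ω))‖ ≤
      Real.sqrt (1 + μ ^ 2) + |μ| :=
  mobius_unit_circle_bound_general μ hω.le
end

section
/- Let 0 < m ≤ M and K > 0. There exist constants C₀, C₁ > 0, depending only on m, M and K, such that for every L ∈ [m, M], every continuous W : [0,L] → ℝ with sup_{x∈[0,L]} |W(x)| ≤ M, and every z ∈ ℂ with Re z ∈ [−K, K] and Im z > C₀, the solution E of −E'' + W E = z E on [0,L] with E(0) = 1 and E'(0) = −i√z satisfies |E(L)| ≥ C₁ · Im z. -/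
open Set

/-! With `c = -i√z` the equation reads `E'' = c² E + W E`, so `E` and its deviation `F = E' - c E`
from the growing free solution satisfy `E' = c E + F`, `F' = -c F + W E`. Along this system the
form `Q = M |E|² - |F|²` obeys `Q' ≥ 2 r Q` as soon as `r² + M ≤ (Re c)²`, and `F 0 = 0`, so
`M |E L|² ≥ Q L ≥ e^{2 r L} M |E 0|²`. Since `(Re c)² = (|z| - Re z) / 2`, the rate
`r = √(Im z) / 2` is admissible once `Im z` is large, and `e^{r L} ≥ (r L)² / 2 = L² (Im z) / 8`. -/

lemma mul_exp_le_of_mul_le_deriv_right {f f' : ℝ → ℝ} {k a b : ℝ} (hf : ContinuousOn f (Icc a b))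
    (hf' : ∀ x ∈ Ico a b, HasDerivWithinAt f (f' x) (Ici x) x)
    (hbound : ∀ x ∈ Ico a b, k * f x ≤ f' x) :
    ∀ x ∈ Icc a b, f a * Real.exp (k * (x - a)) ≤ f x := fun x hx ↦ by
  have h := le_gronwallBound_of_liminf_deriv_right_le (f := -f) (f' := -f') (K := k) (ε := 0)
    hf.neg (fun y hy _ hr ↦ (hf' y hy).neg.liminf_right_slope_le hr) le_rfl
    (fun y hy ↦ by simpa using hbound y hy) x hx
  simpa [gronwallBound_ε0] using h

lemma two_mul_mul_mul_le_of_le_mul {M p q : ℝ} (hM : 0 ≤ M) (hq : 0 < q) (hpq : M ≤ p * q)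
    (x y : ℝ) : 2 * M * (x * y) ≤ M * p * x ^ 2 + q * y ^ 2 := by
  refine le_of_mul_le_mul_left ?_ hq
  have hMx : M * x ^ 2 * M ≤ M * x ^ 2 * (p * q) := by gcongr
  linarith [sq_nonneg (M * x - q * y)]

section InnerProductSpace

variable {H : Type*} [NormedAddCommGroup H] [InnerProductSpace ℂ H]

attribute [local instance] InnerProductSpace.complexToReal

lemma real_inner_complex_smul_self_right (c : ℂ) (u : H) :
    inner ℝ u (c • u) = c.re * ‖u‖ ^ 2 := by
  rw [real_inner_eq_re_inner ℂ, inner_smul_right, inner_self_eq_norm_sq_to_K]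
  norm_cast
  exact Complex.re_mul_ofReal _ _

/-- The quadratic form `M ‖u‖² - ‖v‖²`, nonnegative exactly on the cone `‖v‖² ≤ M ‖u‖²`. It serves
as a Lyapunov function, with `u` the solution and `v` its deviation from exponential growth. -/
def coneForm (M : ℝ) (u v : H) : ℝ := M * ‖u‖ ^ 2 - ‖v‖ ^ 2

lemma two_mul_mul_coneForm_le {M r : ℝ} {c : ℂ} {u v w : H} (hM : 0 < M) (hc : 0 ≤ c.re)
    (hr : r ^ 2 + M ≤ c.re ^ 2) (hw : ‖w‖ ≤ M * ‖u‖) :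
    2 * r * coneForm M u v ≤
      M * (2 * inner ℝ u (c • u + v)) - 2 * inner ℝ v (-c • v + w) := by
  have hrc : 0 < c.re + r := by
    linarith [neg_abs_le r, abs_lt_of_sq_lt_sq (show r ^ 2 < c.re ^ 2 by linarith) hc]
  have huv : -(‖u‖ * ‖v‖) ≤ inner ℝ u v := neg_le_of_abs_le (abs_real_inner_le_norm u v)
  have hvw : inner ℝ v w ≤ ‖v‖ * (M * ‖u‖) := (real_inner_le_norm v w).trans (by gcongr)
  have hamgm := two_mul_mul_mul_le_of_le_mul (p := c.re - r) hM.le hrc (by linarith) ‖u‖ ‖v‖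
  simp only [coneForm, inner_add_right, real_inner_complex_smul_self_right, Complex.neg_re]
  linarith [mul_le_mul_of_nonneg_left huv hM.le]

variable {M r a b : ℝ}

lemma coneForm_mul_exp_le {c : ℂ} {u v w : ℝ → H} (hab : a ≤ b) (hM : 0 < M) (hc : 0 ≤ c.re)
    (hr : r ^ 2 + M ≤ c.re ^ 2)
    (hu : ∀ x ∈ Icc a b, HasDerivWithinAt u (c • u x + v x) (Icc a b) x)
    (hv : ∀ x ∈ Icc a b, HasDerivWithinAt v (-c • v x + w x) (Icc a b) x)
    (hw : ∀ x ∈ Icc a b, ‖w x‖ ≤ M * ‖u x‖) :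
    coneForm M (u a) (v a) * Real.exp (2 * r * (b - a)) ≤ coneForm M (u b) (v b) := by
  let Q : ℝ → ℝ := fun x ↦ coneForm M (u x) (v x)
  let Q' : ℝ → ℝ := fun x ↦
    M * (2 * inner ℝ (u x) (c • u x + v x)) - 2 * inner ℝ (v x) (-c • v x + w x)
  have hQ : ∀ x ∈ Icc a b, HasDerivWithinAt Q (Q' x) (Icc a b) x := fun x hx ↦
    ((hu x hx).norm_sq.const_mul M).sub (hv x hx).norm_sq
  have hQ_right : ∀ x ∈ Ico a b, HasDerivWithinAt Q (Q' x) (Ici x) x := fun x hx ↦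
    (hQ x (Ico_subset_Icc_self hx)).mono_of_mem_nhdsWithin (Icc_mem_nhdsGE_of_mem hx)
  exact mul_exp_le_of_mul_le_deriv_right (fun x hx ↦ (hQ x hx).continuousWithinAt) hQ_right
    (fun x hx ↦ two_mul_mul_coneForm_le hM hc hr (hw x (Ico_subset_Icc_self hx)))
    b (right_mem_Icc.2 hab)

variable {E E' E'' : ℝ → H}

lemma exp_mul_norm_le_norm_of_norm_sub_sq_smul_le {c : ℂ} (hab : a ≤ b) (hM : 0 < M)
    (hc : 0 ≤ c.re) (hr : r ^ 2 + M ≤ c.re ^ 2)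
    (hE : ∀ x ∈ Icc a b, HasDerivWithinAt E (E' x) (Icc a b) x)
    (hE' : ∀ x ∈ Icc a b, HasDerivWithinAt E' (E'' x) (Icc a b) x)
    (hbound : ∀ x ∈ Icc a b, ‖E'' x - c ^ 2 • E x‖ ≤ M * ‖E x‖) (ha : E' a = c • E a) :
    Real.exp (r * (b - a)) * ‖E a‖ ≤ ‖E b‖ := by
  let F : ℝ → H := fun x ↦ E' x - c • E x
  have hEF : ∀ x, E' x = c • E x + F x := fun x ↦ (add_sub_cancel _ _).symm
  have hE_deriv : ∀ x ∈ Icc a b, HasDerivWithinAt E (c • E x + F x) (Icc a b) x := fun x hx ↦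
    hEF x ▸ hE x hx
  have hF_deriv : ∀ x ∈ Icc a b,
      HasDerivWithinAt F (-c • F x + (E'' x - c ^ 2 • E x)) (Icc a b) x := fun x hx ↦
    ((hE' x hx).sub ((hE x hx).const_smul c)).congr_deriv (by rw [hEF]; module)
  refine le_of_sq_le_sq (le_of_mul_le_mul_left ?_ hM) (norm_nonneg _)
  calc M * (Real.exp (r * (b - a)) * ‖E a‖) ^ 2
      = coneForm M (E a) (F a) * Real.exp (2 * r * (b - a)) := by
        have hFa : F a = 0 := sub_eq_zero.2 ha
        rw [coneForm, hFa, norm_zero, mul_pow, ← Real.exp_nat_mul, Nat.cast_ofNat, ← mul_assoc 2 r]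
        ring
    _ ≤ coneForm M (E b) (F b) := coneForm_mul_exp_le hab hM hc hr hE_deriv hF_deriv hbound
    _ ≤ M * ‖E b‖ ^ 2 := sub_le_self _ (sq_nonneg _)

lemma exp_sqrt_im_mul_norm_le_norm_of_norm_add_smul_le {z : ℂ} (hab : a ≤ b) (hM : 0 < M)
    (hz : 0 ≤ z.im) (hzM : 2 * z.re + 4 * M ≤ z.im)
    (hE : ∀ x ∈ Icc a b, HasDerivWithinAt E (E' x) (Icc a b) x)
    (hE' : ∀ x ∈ Icc a b, HasDerivWithinAt E' (E'' x) (Icc a b) x)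
    (hbound : ∀ x ∈ Icc a b, ‖E'' x + z • E x‖ ≤ M * ‖E x‖)
    (ha : E' a = (-Complex.I * z ^ (1 / 2 : ℂ)) • E a) :
    Real.exp (√z.im / 2 * (b - a)) * ‖E a‖ ≤ ‖E b‖ := by
  set c : ℂ := -Complex.I * z ^ (1 / 2 : ℂ) with hc
  have hc_sq : c ^ 2 = -z := by
    rw [hc, mul_pow, neg_sq, Complex.I_sq, one_div, Complex.cpow_ofNat_inv_pow, neg_one_mul]
  have hc_re : c.re = √((‖z‖ - z.re) / 2) := by
    simp [hc, ← Complex.cpow_inv_two_im_eq_sqrt hz]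
  have hrate : (√z.im / 2) ^ 2 + M ≤ c.re ^ 2 := by
    rw [div_pow, Real.sq_sqrt hz, hc_re, Real.sq_sqrt (by linarith [Complex.re_le_norm z])]
    linarith [Complex.im_le_norm z]
  exact exp_mul_norm_le_norm_of_norm_sub_sq_smul_le hab hM (hc_re ▸ Real.sqrt_nonneg _) hrate
    hE hE' (by simpa [hc_sq] using hbound) ha

theorem abs_E_lower_bound_general {m : ℝ} (hm : 0 < m) (hM : 0 < M) (K : ℝ) :
    ∃ C₀ > (0 : ℝ), ∃ C₁ > (0 : ℝ), ∀ L ≥ m, ∀ z : ℂ, z.re ≤ K → C₀ < z.im →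
      ∀ E E' E'' : ℝ → H,
        (∀ x ∈ Icc 0 L, HasDerivWithinAt E (E' x) (Icc 0 L) x) →
        (∀ x ∈ Icc 0 L, HasDerivWithinAt E' (E'' x) (Icc 0 L) x) →
        (∀ x ∈ Icc 0 L, ‖E'' x + z • E x‖ ≤ M * ‖E x‖) →
        E' 0 = (-Complex.I * z ^ (1 / 2 : ℂ)) • E 0 →
        C₁ * z.im * ‖E 0‖ ≤ ‖E L‖ := by
  refine ⟨2 * |K| + 4 * M, by positivity, m ^ 2 / 8, by positivity, ?_⟩
  intro L hL z hzK hzim E E' E'' hE hE' hbound h0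
  have hz : 0 ≤ z.im := le_trans (by positivity) hzim.le
  have hL0 : 0 ≤ L := hm.le.trans hL
  have hexp := Real.pow_div_factorial_le_exp (x := √z.im / 2 * L) (by positivity) 2
  calc m ^ 2 / 8 * z.im * ‖E 0‖ ≤ L ^ 2 / 8 * z.im * ‖E 0‖ := by gcongr
    _ = (√z.im / 2 * L) ^ 2 / Nat.factorial 2 * ‖E 0‖ := by
        rw [mul_pow, div_pow, Real.sq_sqrt hz, Nat.factorial_two]; push_cast; ring
    _ ≤ Real.exp (√z.im / 2 * (L - 0)) * ‖E 0‖ := by rw [sub_zero]; gcongr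
    _ ≤ ‖E L‖ := exp_sqrt_im_mul_norm_le_norm_of_norm_add_smul_le hL0 hM hz
        (by linarith [le_abs_self K]) hE hE' hbound h0

end InnerProductSpace

/-- Let `0 < m ≤ M`, `K > 0`. There exist `C₀, C₁ > 0` depending only on
`m, M, K` such that for every `L ∈ [m, M]`, continuous `W : [0,L] → ℝ` with `‖W‖_∞ ≤ M`,
and `z` with `Re z ∈ [−K,K]`, `Im z > C₀`, the solution `E` of `−E'' + W E = z E` with
`E(0) = 1`, `E'(0) = −i√z` satisfies `|E(L)| ≥ C₁ · Im z`. -/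
theorem abs_E_lower_bound
    (m M K : ℝ) (hm : 0 < m) (hmM : m ≤ M) (hK : 0 < K) :
    ∃ C₀ > (0:ℝ), ∃ C₁ > (0:ℝ),
      ∀ L ∈ Icc m M, ∀ W : ℝ → ℝ, ContinuousOn W (Icc 0 L) →
        (∀ x ∈ Icc (0:ℝ) L, |W x| ≤ M) →
        ∀ z : ℂ, z.re ∈ Icc (-K) K → C₀ < z.im →
          ∀ E E' E'' : ℝ → ℂ,
            (∀ x ∈ Icc (0:ℝ) L, HasDerivWithinAt E (E' x) (Icc 0 L) x) →
            (∀ x ∈ Icc (0:ℝ) L, HasDerivWithinAt E' (E'' x) (Icc 0 L) x) →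
            ContinuousOn E'' (Icc 0 L) →
            (∀ x ∈ Icc (0:ℝ) L, -E'' x + (W x : ℂ) * E x = z * E x) →
            E 0 = 1 → E' 0 = -Complex.I * z ^ (1/2 : ℂ) →
            C₁ * z.im ≤ ‖E L‖ := by
  obtain ⟨C₀, hC₀, C₁, hC₁, h⟩ := abs_E_lower_bound_general (H := ℂ) hm (hm.trans_le hmM) K
  refine ⟨C₀, hC₀, C₁, hC₁, fun L hL W _ hW z hz hzim E E' E'' hE hE' _ hode h0 h0' ↦ ?_⟩
  have hbound : ∀ x ∈ Icc 0 L, ‖E'' x + z • E x‖ ≤ M * ‖E x‖ := fun x hx ↦ by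
    rw [smul_eq_mul, ← hode x hx, add_neg_cancel_left, norm_mul, Complex.norm_real]
    exact mul_le_mul_of_nonneg_right (hW x hx) (norm_nonneg _)
  simpa [h0] using h L hL.1 z hz.2 hzim E E' E'' hE hE' hbound (by simp [h0, h0'])
end

section
/- Let 0 < m ≤ M and K > 0. There exist constants C₀, C₂ > 0, depending only on m, M and K, such that for every L ∈ [m, M], every continuous W : [0,L] → ℝ with sup_{x∈[0,L]} |W(x)| ≤ M, and every z ∈ ℂ with Re z ∈ [−K, K] and Im z > C₀, the solution E of −E'' + W E = z E on [0,L] with E(0) = 1 and E'(0) = −i√z satisfies E(L) ≠ 0 and |E'(L)/E(L) + i√z| ≤ C₂ · |√z| / Im z. -/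
open Set

/-!
Write `a = -i√z`, so that `Re a = Im √z > 0` and the equation reads `E'' = (W + a²) E`. The defect
`u = E' - a E` satisfies `E' = a E + u` and `u' = -a u + W E`: up to the bounded term `W E`, the
first component expands and the second contracts at rate `Re a`. Hence the cone `‖u‖ ≤ r ‖E‖` is
forward invariant as soon as `M + r² ≤ 2 r Re a`, because `‖u‖² - r² ‖E‖²` is then nonincreasing.
The initial condition is `u(0) = 0`, and `r = M / Re a` is admissible once `M ≤ (Re a)²`.
This gives `|E'/E - a| ≤ M / Im √z`, and `Im z = 2 Re √z Im √z` turns it into the stated bound.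
-/

section HyperbolicSystem

variable {H : Type*} [NormedAddCommGroup H] {s : Set ℝ} {e u : ℝ → H} {r x₀ x : ℝ}

lemma norm_le_mul_norm_of_antitoneOn_sq_sub
    (h : AntitoneOn (fun t => ‖u t‖ ^ 2 - r ^ 2 * ‖e t‖ ^ 2) s) (hr : 0 ≤ r)
    (hx₀ : x₀ ∈ s) (hx : x ∈ s) (hle : x₀ ≤ x) (h₀ : ‖u x₀‖ ≤ r * ‖e x₀‖) :
    ‖u x‖ ≤ r * ‖e x‖ := by
  refine le_of_sq_le_sq ?_ (by positivity)
  have hsq : ‖u x₀‖ ^ 2 ≤ (r * ‖e x₀‖) ^ 2 := by gcongr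
  linarith [h hx₀ hx hle, mul_pow r ‖e x₀‖ 2, mul_pow r ‖e x‖ 2]

lemma norm_lt_mul_norm_of_antitoneOn_sq_sub
    (h : AntitoneOn (fun t => ‖u t‖ ^ 2 - r ^ 2 * ‖e t‖ ^ 2) s) (hr : 0 ≤ r)
    (hx₀ : x₀ ∈ s) (hx : x ∈ s) (hle : x₀ ≤ x) (h₀ : ‖u x₀‖ < r * ‖e x₀‖) :
    ‖u x‖ < r * ‖e x‖ := by
  refine lt_of_pow_lt_pow_left₀ 2 (by positivity) ?_
  have hsq : ‖u x₀‖ ^ 2 < (r * ‖e x₀‖) ^ 2 := by gcongr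
  linarith [h hx₀ hx hle, mul_pow r ‖e x₀‖ 2, mul_pow r ‖e x‖ 2]

variable [InnerProductSpace ℝ H] {A : H → H} {f : ℝ → H} {α M : ℝ}

lemma antitoneOn_norm_sq_sub_of_hyperbolic_system (hs : Convex ℝ s) (hα : 0 ≤ α)
    (hr : M + r ^ 2 ≤ 2 * r * α) (hA : ∀ v, α * ‖v‖ ^ 2 ≤ inner ℝ v (A v))
    (hf : ∀ t ∈ s, ‖f t‖ ≤ M * ‖e t‖)
    (he : ∀ t ∈ s, HasDerivWithinAt e (A (e t) + u t) s t)
    (hu : ∀ t ∈ s, HasDerivWithinAt u (f t - A (u t)) s t) :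
    AntitoneOn (fun t => ‖u t‖ ^ 2 - r ^ 2 * ‖e t‖ ^ 2) s := by
  have hderiv : ∀ t ∈ s, HasDerivWithinAt (fun t => ‖u t‖ ^ 2 - r ^ 2 * ‖e t‖ ^ 2)
      (2 * inner ℝ (u t) (f t - A (u t)) - r ^ 2 * (2 * inner ℝ (e t) (A (e t) + u t))) s t :=
    fun t ht => (hu t ht).norm_sq.sub ((he t ht).norm_sq.const_mul (r ^ 2))
  refine antitoneOn_of_hasDerivWithinAt_nonpos hs
    (fun t ht => (hderiv t ht).continuousWithinAt)
    (fun t ht => (hderiv t (interior_subset ht)).mono interior_subset) fun t ht => ?_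
  have huf : inner ℝ (u t) (f t) ≤ M * (‖u t‖ * ‖e t‖) := calc
    inner ℝ (u t) (f t) ≤ ‖u t‖ * ‖f t‖ := real_inner_le_norm _ _
    _ ≤ ‖u t‖ * (M * ‖e t‖) := by gcongr; exact hf t (interior_subset ht)
    _ = M * (‖u t‖ * ‖e t‖) := by ring
  have hue : -(‖u t‖ * ‖e t‖) ≤ inner ℝ (e t) (u t) := by
    rw [mul_comm]
    exact (abs_le.1 (abs_real_inner_le_norm _ _)).1
  rw [inner_sub_right, inner_add_right]
  calc 2 * (inner ℝ (u t) (f t) - inner ℝ (u t) (A (u t)))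
        - r ^ 2 * (2 * (inner ℝ (e t) (A (e t)) + inner ℝ (e t) (u t)))
      ≤ 2 * (M * (‖u t‖ * ‖e t‖) - α * ‖u t‖ ^ 2)
        - r ^ 2 * (2 * (α * ‖e t‖ ^ 2 + -(‖u t‖ * ‖e t‖))) := by
        gcongr <;> exact hA _
    _ = 2 * ((M + r ^ 2) * (‖u t‖ * ‖e t‖)) - 2 * α * (‖u t‖ ^ 2 + r ^ 2 * ‖e t‖ ^ 2) := by ring
    _ ≤ 2 * (2 * r * α * (‖u t‖ * ‖e t‖)) - 2 * α * (‖u t‖ ^ 2 + r ^ 2 * ‖e t‖ ^ 2) := by gcongr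
    _ = -(2 * α * (‖u t‖ - r * ‖e t‖) ^ 2) := by ring
    _ ≤ 0 := neg_nonpos.2 (by positivity)

end HyperbolicSystem

lemma real_inner_mul_self_right (a w : ℂ) : inner ℝ w (a * w) = a.re * ‖w‖ ^ 2 := by
  rw [Complex.inner, mul_assoc, Complex.mul_conj, Complex.re_mul_ofReal, Complex.normSq_eq_norm_sq]

section LogDeriv

variable {s : Set ℝ} {a : ℂ} {M r x₀ x : ℝ} {W E E' : ℝ → ℂ}

lemma antitoneOn_norm_deriv_sub_mul_sq_sub (hs : Convex ℝ s) (ha : 0 ≤ a.re)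
    (hr : M + r ^ 2 ≤ 2 * r * a.re) (hW : ∀ t ∈ s, ‖W t‖ ≤ M)
    (hE : ∀ t ∈ s, HasDerivWithinAt E (E' t) s t)
    (hE' : ∀ t ∈ s, HasDerivWithinAt E' ((W t + a ^ 2) * E t) s t) :
    AntitoneOn (fun t => ‖E' t - a * E t‖ ^ 2 - r ^ 2 * ‖E t‖ ^ 2) s := by
  refine antitoneOn_norm_sq_sub_of_hyperbolic_system (A := (a * ·)) (f := fun t => W t * E t)
    hs ha hr (fun v => (real_inner_mul_self_right a v).ge) (fun t ht => ?_)
    (fun t ht => (hE t ht).congr_deriv (by ring))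
    (fun t ht => ((hE' t ht).sub ((hE t ht).const_mul a)).congr_deriv (by ring))
  rw [norm_mul]
  gcongr
  exact hW t ht

lemma ne_zero_of_deriv_eq_mul (hs : Convex ℝ s) (ha : 0 < a.re) (hM : M ≤ a.re ^ 2)
    (hW : ∀ t ∈ s, ‖W t‖ ≤ M) (hE : ∀ t ∈ s, HasDerivWithinAt E (E' t) s t)
    (hE' : ∀ t ∈ s, HasDerivWithinAt E' ((W t + a ^ 2) * E t) s t)
    (hx₀ : x₀ ∈ s) (hx : x ∈ s) (hle : x₀ ≤ x) (hE₀ : E x₀ ≠ 0) (hE'₀ : E' x₀ = a * E x₀) :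
    E x ≠ 0 := by
  -- The widest admissible cone `r = Re a` is nondegenerate even when `M = 0`.
  have hcone : ‖E' x - a * E x‖ < a.re * ‖E x‖ :=
    norm_lt_mul_norm_of_antitoneOn_sq_sub (u := fun t => E' t - a * E t)
      (antitoneOn_norm_deriv_sub_mul_sq_sub hs ha.le (by linarith) hW hE hE') ha.le hx₀ hx hle
      (by simpa [hE'₀] using mul_pos ha (norm_pos_iff.2 hE₀))
  exact norm_pos_iff.1 (pos_of_mul_pos_right ((norm_nonneg _).trans_lt hcone) ha.le)

lemma norm_deriv_sub_mul_le (hs : Convex ℝ s) (ha : 0 < a.re) (hM : M ≤ a.re ^ 2)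
    (hW : ∀ t ∈ s, ‖W t‖ ≤ M) (hE : ∀ t ∈ s, HasDerivWithinAt E (E' t) s t)
    (hE' : ∀ t ∈ s, HasDerivWithinAt E' ((W t + a ^ 2) * E t) s t)
    (hx₀ : x₀ ∈ s) (hx : x ∈ s) (hle : x₀ ≤ x)
    (h₀ : ‖E' x₀ - a * E x₀‖ ≤ M / a.re * ‖E x₀‖) :
    ‖E' x - a * E x‖ ≤ M / a.re * ‖E x‖ := by
  have hM₀ : 0 ≤ M := (norm_nonneg _).trans (hW x₀ hx₀)
  have hr : (M / a.re) ^ 2 ≤ M := by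
    rw [div_pow, div_le_iff₀ (by positivity), sq M]
    gcongr
  have hra : M / a.re * a.re = M := div_mul_cancel₀ M ha.ne'
  exact norm_le_mul_norm_of_antitoneOn_sq_sub (u := fun t => E' t - a * E t)
    (antitoneOn_norm_deriv_sub_mul_sq_sub hs ha.le (by linarith) hW hE hE') (by positivity)
    hx₀ hx hle h₀

lemma ne_zero_and_norm_logDeriv_sub_le (hs : Convex ℝ s) (ha : 0 < a.re) (hM : M ≤ a.re ^ 2)
    (hW : ∀ t ∈ s, ‖W t‖ ≤ M) (hE : ∀ t ∈ s, HasDerivWithinAt E (E' t) s t)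
    (hE' : ∀ t ∈ s, HasDerivWithinAt E' ((W t + a ^ 2) * E t) s t)
    (hx₀ : x₀ ∈ s) (hx : x ∈ s) (hle : x₀ ≤ x) (hE₀ : E x₀ ≠ 0) (hE'₀ : E' x₀ = a * E x₀) :
    E x ≠ 0 ∧ ‖E' x / E x - a‖ ≤ M / a.re := by
  have hEx : E x ≠ 0 := ne_zero_of_deriv_eq_mul hs ha hM hW hE hE' hx₀ hx hle hE₀ hE'₀
  have hM₀ : 0 ≤ M := (norm_nonneg _).trans (hW x₀ hx₀)
  refine ⟨hEx, ?_⟩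
  rw [div_sub' hEx, mul_comm (E x) a, norm_div, div_le_iff₀ (norm_pos_iff.2 hEx)]
  refine norm_deriv_sub_mul_le hs ha hM hW hE hE' hx₀ hx hle ?_
  rw [hE'₀, sub_self, norm_zero]
  positivity

end LogDeriv

section PrincipalSquareRoot

lemma sq_im_cpow_half (z : ℂ) : (z ^ (1 / 2 : ℂ)).im ^ 2 = (‖z‖ - z.re) / 2 := by
  rw [one_div, ← sq_abs, Complex.abs_cpow_inv_two_im,
    Real.sq_sqrt (by linarith [Complex.re_le_norm z])]

variable {z : ℂ}

lemma im_cpow_half_nonneg (hz : 0 ≤ z.im) : 0 ≤ (z ^ (1 / 2 : ℂ)).im := by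
  rw [one_div, Complex.cpow_inv_two_im_eq_sqrt hz]
  exact Real.sqrt_nonneg _

lemma im_le_two_mul_norm_cpow_half_mul_im (hz : 0 ≤ z.im) :
    z.im ≤ 2 * ‖z ^ (1 / 2 : ℂ)‖ * (z ^ (1 / 2 : ℂ)).im := by
  have hs : 0 ≤ (z ^ (1 / 2 : ℂ)).im := im_cpow_half_nonneg hz
  calc z.im = ((z ^ (1 / 2 : ℂ)) ^ 2).im := by simp
    _ = 2 * (z ^ (1 / 2 : ℂ)).re * (z ^ (1 / 2 : ℂ)).im := by rw [sq, Complex.mul_im]; ring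
    _ ≤ 2 * ‖z ^ (1 / 2 : ℂ)‖ * (z ^ (1 / 2 : ℂ)).im := by
      gcongr
      exact Complex.re_le_norm _

lemma im_cpow_half_pos (hz : 0 < z.im) : 0 < (z ^ (1 / 2 : ℂ)).im :=
  pos_of_mul_pos_right (hz.trans_le (im_le_two_mul_norm_cpow_half_mul_im hz.le)) (by positivity)

end PrincipalSquareRoot

theorem log_deriv_E_estimate_general {L M : ℝ} (hL : 0 ≤ L) {W : ℝ → ℂ}
    (hW : ∀ x ∈ Icc (0 : ℝ) L, ‖W x‖ ≤ M) {z : ℂ} (hz : 0 < z.im) (hzM : 2 * M + z.re ≤ ‖z‖)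
    {E E' E'' : ℝ → ℂ} (hE : ∀ x ∈ Icc (0 : ℝ) L, HasDerivWithinAt E (E' x) (Icc 0 L) x)
    (hE' : ∀ x ∈ Icc (0 : ℝ) L, HasDerivWithinAt E' (E'' x) (Icc 0 L) x)
    (hode : ∀ x ∈ Icc (0 : ℝ) L, -E'' x + W x * E x = z * E x)
    (hE0 : E 0 = 1) (hE'0 : E' 0 = -Complex.I * z ^ (1 / 2 : ℂ)) :
    E L ≠ 0 ∧
      ‖E' L / E L + Complex.I * z ^ (1 / 2 : ℂ)‖ ≤ 2 * M * ‖z ^ (1 / 2 : ℂ)‖ / z.im := by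
  have hM : 0 ≤ M := (norm_nonneg _).trans (hW 0 (left_mem_Icc.2 hL))
  have hs : 0 < (z ^ (1 / 2 : ℂ)).im := im_cpow_half_pos hz
  have hsq : (z ^ (1 / 2 : ℂ)).im ^ 2 = (‖z‖ - z.re) / 2 := sq_im_cpow_half z
  have hzs := im_le_two_mul_norm_cpow_half_mul_im hz.le
  set a : ℂ := -Complex.I * z ^ (1 / 2 : ℂ) with ha
  have hre : a.re = (z ^ (1 / 2 : ℂ)).im := by simp [ha]
  have ha_sq : a ^ 2 = -z := by simp [ha, mul_pow]
  obtain ⟨hEL, hbound⟩ := ne_zero_and_norm_logDeriv_sub_le (a := a) (convex_Icc 0 L) (hre ▸ hs)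
    (by rw [hre]; linarith) hW hE
    (fun x hx => (hE' x hx).congr_deriv (by linear_combination (-1) * hode x hx - E x * ha_sq))
    (left_mem_Icc.2 hL) (right_mem_Icc.2 hL) hL (by simp [hE0]) (by simp [hE0, hE'0])
  refine ⟨hEL, ?_⟩
  calc ‖E' L / E L + Complex.I * z ^ (1 / 2 : ℂ)‖ = ‖E' L / E L - a‖ := by simp [ha]
    _ ≤ M / (z ^ (1 / 2 : ℂ)).im := hre ▸ hbound
    _ ≤ 2 * M * ‖z ^ (1 / 2 : ℂ)‖ / z.im := by
      rw [div_le_div_iff₀ hs hz]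
      linarith [mul_le_mul_of_nonneg_left hzs hM]

/-- Let `0 < m ≤ M`, `K > 0`. There exist `C₀, C₂ > 0` depending only on
`m, M, K` such that for every `L ∈ [m, M]`, continuous `W : [0,L] → ℝ` with `‖W‖_∞ ≤ M`,
and `z` with `Re z ∈ [−K,K]`, `Im z > C₀`, the solution `E` of `−E'' + W E = z E` with
`E(0) = 1`, `E'(0) = −i√z` satisfies `E(L) ≠ 0` and
`|E'(L)/E(L) + i√z| ≤ C₂ |√z| / Im z`. -/
theorem log_deriv_E_estimate
    (m M K : ℝ) (hm : 0 < m) (hmM : m ≤ M) (hK : 0 < K) :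
    ∃ C₀ > (0:ℝ), ∃ C₂ > (0:ℝ),
      ∀ L ∈ Icc m M, ∀ W : ℝ → ℝ, ContinuousOn W (Icc 0 L) →
        (∀ x ∈ Icc (0:ℝ) L, |W x| ≤ M) →
        ∀ z : ℂ, z.re ∈ Icc (-K) K → C₀ < z.im →
          ∀ E E' E'' : ℝ → ℂ,
            (∀ x ∈ Icc (0:ℝ) L, HasDerivWithinAt E (E' x) (Icc 0 L) x) →
            (∀ x ∈ Icc (0:ℝ) L, HasDerivWithinAt E' (E'' x) (Icc 0 L) x) →
            ContinuousOn E'' (Icc 0 L) →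
            (∀ x ∈ Icc (0:ℝ) L, -E'' x + (W x : ℂ) * E x = z * E x) →
            E 0 = 1 → E' 0 = -Complex.I * z ^ (1/2 : ℂ) →
            E L ≠ 0 ∧
              ‖E' L / E L + Complex.I * z ^ (1/2 : ℂ)‖ ≤
                C₂ * ‖z ^ (1/2 : ℂ)‖ / z.im := by
  refine ⟨2 * M + K, by linarith, 2 * M, by linarith, fun L hL W _ hW z hzre hzim E E' E'' hE hE' _
    hode => log_deriv_E_estimate_general (hm.le.trans hL.1) (by simpa using hW) (by linarith)
      (by linarith [hzre.2, Complex.im_le_norm z]) hE hE' hode⟩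
end

section
/- Let 0 < m ≤ M. There exists a constant C > 0, depending only on m and M, such that for every L ∈ [m, M], every continuous W : [0,L] → ℝ with sup_{x∈[0,L]} |W(x)| ≤ M, and every z ∈ ℂ with Im z > 0 and |√z| ≥ 1, the solution E of −E'' + W E = z E on [0,L] with E(0) = 1 and E'(0) = −i√z satisfies | |E(L)| · e^{−L·Im √z} − 1 | ≤ C / |√z|. -/
open Set

/-!
Write `k = √z`, so that `Im k ≥ 0`. Removing the free oscillation from `E` by setting
`u(x) = exp(ikx) E(x)` turns the equation into `u'' = 2ik u' + W u` with `u'(0) = 0`. Since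
`Re (2ik) = -2 Im k ≤ 0`, the term `2ik u'` can only decrease `‖u'‖`; hence `‖u‖` and `‖u'‖` are
bounded by a constant `B` which does not depend on `k`. Integrating the equation,
`2ik (u(L) - u(0)) = u'(L) - ∫₀ᴸ W u`, and both terms on the right are at most `M L B` in norm.
-/

section

open Filter Topology

variable {F : Type*} [NormedAddCommGroup F] [NormedSpace ℂ F]

lemma hasDerivWithinAt_exp_mul_sub_smul {f : ℝ → F} {f' : F} {s : Set ℝ} {x : ℝ} (c : ℂ) (t : ℝ)
    (hf : HasDerivWithinAt f f' s x) :
    HasDerivWithinAt (fun y ↦ Complex.exp (c * (y - t : ℝ)) • f y)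
      (Complex.exp (c * (x - t : ℝ)) • (f' + c • f x)) s x := by
  have hexp : HasDerivAt (fun y : ℝ ↦ Complex.exp (c * (y - t : ℝ)))
      (Complex.exp (c * (x - t : ℝ)) * (c * 1)) x :=
    (((hasDerivAt_id x).sub_const t).ofReal_comp.const_mul c).cexp
  refine (hexp.hasDerivWithinAt.smul hf).congr_deriv ?_
  rw [mul_one, smul_add, smul_smul]

lemma eventually_slope_norm_lt_of_re_nonpos {v : ℝ → F} {c : ℂ} {w : F} {x r : ℝ} (hc : c.re ≤ 0)
    (hv : HasDerivWithinAt v (c • v x + w) (Ici x) x) (hr : ‖w‖ < r) :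
    ∀ᶠ y in 𝓝[>] x, (y - x)⁻¹ * (‖v y‖ - ‖v x‖) < r := by
  -- The integrating factor `exp (-c (y - x))` removes `c • v` and has norm at least `1` on `y ≥ x`.
  have hderiv : HasDerivWithinAt (fun y ↦ Complex.exp (-c * (y - x : ℝ)) • v y) w (Ici x) x := by
    simpa using hasDerivWithinAt_exp_mul_sub_smul (-c) x hv
  have hslope := hderiv.Ioi_of_Ici.limsup_slope_norm_le hr
  filter_upwards [hslope, self_mem_nhdsWithin] with y hy hmem
  have hyx : 0 ≤ y - x := sub_nonneg.2 (le_of_lt hmem)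
  have hfactor : 1 ≤ ‖Complex.exp (-c * (y - x : ℝ))‖ := by
    rw [Complex.norm_exp, Complex.re_mul_ofReal, Complex.neg_re]
    exact Real.one_le_exp (mul_nonneg (neg_nonneg.2 hc) hyx)
  have hle : ‖v y‖ ≤ ‖Complex.exp (-c * (y - x : ℝ)) • v y‖ := by
    rw [norm_smul]
    exact le_mul_of_one_le_left (norm_nonneg _) hfactor
  refine lt_of_le_of_lt ?_ hy
  rw [Real.norm_of_nonneg hyx]
  simp only [sub_self, Complex.ofReal_zero, mul_zero, Complex.exp_zero, one_smul]
  gcongr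

lemma norm_le_mul_sub_of_re_nonpos {v g : ℝ → F} {c : ℂ} {a b B : ℝ} (hc : c.re ≤ 0)
    (hv : ∀ x ∈ Icc a b, HasDerivWithinAt v (c • v x + g x) (Icc a b) x)
    (hg : ∀ x ∈ Icc a b, ‖g x‖ ≤ B) (ha : v a = 0) {x : ℝ} (hx : x ∈ Icc a b) :
    ‖v x‖ ≤ B * (x - a) := by
  have h := le_gronwallBound_of_liminf_deriv_right_le (δ := 0) (K := 0) (ε := B)
    (f := fun y ↦ ‖v y‖) (f' := fun y ↦ ‖g y‖)
    (fun y hy ↦ (hv y hy).continuousWithinAt.norm)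
    (fun y hy r hr ↦ (eventually_slope_norm_lt_of_re_nonpos hc
      ((hv y (Ico_subset_Icc_self hy)).mono_of_mem_nhdsWithin (Icc_mem_nhdsGE_of_mem hy))
      hr).frequently)
    (by simp [ha]) (fun y hy ↦ by simpa using hg y (Ico_subset_Icc_self hy)) x hx
  simpa [gronwallBound_K0] using h

section DampedSystem

variable {u v g : ℝ → F} {c : ℂ} {a b M : ℝ}

lemma norm_add_norm_le_mul_exp_of_re_nonpos (hc : c.re ≤ 0)
    (hu : ∀ x ∈ Icc a b, HasDerivWithinAt u (v x) (Icc a b) x)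
    (hv : ∀ x ∈ Icc a b, HasDerivWithinAt v (c • v x + g x) (Icc a b) x)
    (hg : ∀ x ∈ Icc a b, ‖g x‖ ≤ M * ‖u x‖) {x : ℝ} (hx : x ∈ Icc a b) :
    ‖u x‖ + ‖v x‖ ≤ (‖u a‖ + ‖v a‖) * Real.exp (max 1 M * (x - a)) := by
  rw [← gronwallBound_ε0]
  refine le_gronwallBound_of_liminf_deriv_right_le (f := fun y ↦ ‖u y‖ + ‖v y‖)
    (f' := fun y ↦ ‖v y‖ + ‖g y‖)
    (fun y hy ↦ (hu y hy).continuousWithinAt.norm.add (hv y hy).continuousWithinAt.norm)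
    (fun y hy r hr ↦ ?_) le_rfl (fun y hy ↦ ?_) x hx
  · have hmem := Icc_mem_nhdsGE_of_mem hy
    obtain ⟨r₁, hr₁, r₂, hr₂, rfl⟩ : ∃ r₁ > ‖v y‖, ∃ r₂ > ‖g y‖, r₁ + r₂ = r :=
      ⟨(r + ‖v y‖ - ‖g y‖) / 2, by linarith, (r - ‖v y‖ + ‖g y‖) / 2, by linarith, by ring⟩
    have hu_slope := eventually_slope_norm_lt_of_re_nonpos (c := 0) le_rfl
      (by simpa using (hu y (Ico_subset_Icc_self hy)).mono_of_mem_nhdsWithin hmem) hr₁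
    have hv_slope := eventually_slope_norm_lt_of_re_nonpos hc
      ((hv y (Ico_subset_Icc_self hy)).mono_of_mem_nhdsWithin hmem) hr₂
    refine (hu_slope.and hv_slope).frequently.mono fun t ht ↦ ?_
    rw [add_sub_add_comm, mul_add]
    exact add_lt_add ht.1 ht.2
  · have hgy := hg y (Ico_subset_Icc_self hy)
    have hv_le := mul_le_mul_of_nonneg_right (le_max_left 1 M) (norm_nonneg (v y))
    have hu_le := mul_le_mul_of_nonneg_right (le_max_right 1 M) (norm_nonneg (u y))
    linarith

lemma norm_mul_norm_sub_le_of_re_nonpos (hab : a ≤ b) (hM : 0 ≤ M) (hc : c.re ≤ 0)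
    (hu : ∀ x ∈ Icc a b, HasDerivWithinAt u (v x) (Icc a b) x)
    (hv : ∀ x ∈ Icc a b, HasDerivWithinAt v (c • v x + g x) (Icc a b) x)
    (hg : ∀ x ∈ Icc a b, ‖g x‖ ≤ M * ‖u x‖) (ha : v a = 0) :
    ‖c‖ * ‖u b - u a‖ ≤ 2 * (M * (b - a) * Real.exp (max 1 M * (b - a)) * ‖u a‖) := by
  set B := M * (‖u a‖ * Real.exp (max 1 M * (b - a)))
  have hb : b ∈ Icc a b := right_mem_Icc.2 hab
  have hgB : ∀ x ∈ Icc a b, ‖g x‖ ≤ B := by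
    intro x hx
    have hux : ‖u x‖ ≤ ‖u a‖ * Real.exp (max 1 M * (x - a)) := by
      have h := norm_add_norm_le_mul_exp_of_re_nonpos hc hu hv hg hx
      rw [ha, norm_zero, add_zero] at h
      exact (le_add_of_nonneg_right (norm_nonneg _)).trans h
    refine (hg x hx).trans ?_
    have := hx.2
    exact mul_le_mul_of_nonneg_left (hux.trans (by gcongr)) hM
  have hvb : ‖v b‖ ≤ B * (b - a) := norm_le_mul_sub_of_re_nonpos hc hv hgB ha hb
  have hint : ‖(v b - c • u b) - (v a - c • u a)‖ ≤ B * (b - a) :=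
    norm_image_sub_le_of_norm_deriv_le_segment'
      (fun x hx ↦ ((hv x hx).sub ((hu x hx).const_smul c)).congr_deriv (add_sub_cancel_left _ _))
      (fun x hx ↦ hgB x (Ico_subset_Icc_self hx)) b hb
  calc ‖c‖ * ‖u b - u a‖ = ‖v b - ((v b - c • u b) - (v a - c • u a))‖ := by
        rw [← norm_smul, ha]
        congr 1
        module
    _ ≤ ‖v b‖ + ‖(v b - c • u b) - (v a - c • u a)‖ := norm_sub_le _ _
    _ ≤ 2 * (B * (b - a)) := by linarith
    _ = 2 * (M * (b - a) * Real.exp (max 1 M * (b - a)) * ‖u a‖) := by ring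

end DampedSystem

lemma norm_mul_norm_exp_smul_sub_le {E E' E'' : ℝ → F} {W : ℝ → F →L[ℂ] F} {k : ℂ} {L M : ℝ}
    (hL : 0 ≤ L) (hk : 0 ≤ k.im) (hW : ∀ x ∈ Icc 0 L, ‖W x‖ ≤ M)
    (hE : ∀ x ∈ Icc 0 L, HasDerivWithinAt E (E' x) (Icc 0 L) x)
    (hE' : ∀ x ∈ Icc 0 L, HasDerivWithinAt E' (E'' x) (Icc 0 L) x)
    (heq : ∀ x ∈ Icc 0 L, -E'' x + W x (E x) = k ^ 2 • E x)
    (hE'0 : E' 0 = (-Complex.I * k) • E 0) :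
    ‖k‖ * ‖Complex.exp (Complex.I * k * L) • E L - E 0‖ ≤
      M * L * Real.exp (max 1 M * L) * ‖E 0‖ := by
  set c : ℂ := Complex.I * k with hc
  let e : ℝ → ℂ := fun x ↦ Complex.exp (c * (x - 0 : ℝ))
  have hu : ∀ x ∈ Icc 0 L, HasDerivWithinAt (fun y ↦ e y • E y) (e x • (E' x + c • E x))
      (Icc 0 L) x := fun x hx ↦ hasDerivWithinAt_exp_mul_sub_smul c 0 (hE x hx)
  have hv : ∀ x ∈ Icc 0 L, HasDerivWithinAt (fun y ↦ e y • (E' y + c • E y))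
      ((2 * c) • e x • (E' x + c • E x) + e x • W x (E x)) (Icc 0 L) x := by
    intro x hx
    have h_ode : E'' x = W x (E x) + c ^ 2 • E x := by
      rw [hc, mul_pow, Complex.I_sq, neg_one_mul, neg_smul, ← heq x hx]
      abel
    refine (hasDerivWithinAt_exp_mul_sub_smul c 0
      ((hE' x hx).add ((hE x hx).const_smul c))).congr_deriv ?_
    simp only [e, Pi.add_apply, Pi.smul_apply, h_ode]
    module
  have hg : ∀ x ∈ Icc 0 L, ‖e x • W x (E x)‖ ≤ M * ‖e x • E x‖ := by
    intro x hx
    rw [← map_smul]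
    exact (W x).le_of_opNorm_le (hW x hx) _
  have hM : 0 ≤ M := (norm_nonneg _).trans (hW 0 (left_mem_Icc.2 hL))
  have h := norm_mul_norm_sub_le_of_re_nonpos hL hM (by simpa [c] using hk) hu hv hg
    (by simp [hE'0, hc])
  have hnorm : ‖2 * c‖ = 2 * ‖k‖ := by simp [c]
  rw [hnorm, mul_assoc] at h
  simpa [e] using h

lemma cpow_half_im_nonneg {z : ℂ} (hz : 0 ≤ z.im) : 0 ≤ (z ^ (1 / 2 : ℂ)).im := by
  rw [one_div, Complex.cpow_inv_two_im_eq_sqrt hz]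
  exact Real.sqrt_nonneg _

theorem abs_E_asymptotics_general {E E' E'' : ℝ → F} {W : ℝ → F →L[ℂ] F} {z : ℂ} {L M : ℝ}
    (hL : 0 ≤ L) (hW : ∀ x ∈ Icc 0 L, ‖W x‖ ≤ M) (hz : 0 ≤ z.im) (hz0 : z ≠ 0)
    (hE : ∀ x ∈ Icc 0 L, HasDerivWithinAt E (E' x) (Icc 0 L) x)
    (hE' : ∀ x ∈ Icc 0 L, HasDerivWithinAt E' (E'' x) (Icc 0 L) x)
    (heq : ∀ x ∈ Icc 0 L, -E'' x + W x (E x) = z • E x)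
    (hE'0 : E' 0 = (-Complex.I * z ^ (1 / 2 : ℂ)) • E 0) :
    |‖E L‖ * Real.exp (-L * (z ^ (1 / 2 : ℂ)).im) - ‖E 0‖| ≤
      M * L * Real.exp (max 1 M * L) * ‖E 0‖ / ‖z ^ (1 / 2 : ℂ)‖ := by
  have hsq : (z ^ (1 / 2 : ℂ)) ^ 2 = z := by
    rw [one_div, Complex.cpow_ofNat_inv_pow]
  have hk0 : 0 < ‖z ^ (1 / 2 : ℂ)‖ := by simp [hz0]
  have hk := cpow_half_im_nonneg hz
  set k := z ^ (1 / 2 : ℂ)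
  have hnorm : ‖E L‖ * Real.exp (-L * k.im) = ‖Complex.exp (Complex.I * k * L) • E L‖ := by
    rw [norm_smul, Complex.norm_exp, mul_comm]
    congr 2
    simp [mul_comm]
  rw [hnorm, le_div_iff₀' hk0]
  calc ‖k‖ * |‖Complex.exp (Complex.I * k * L) • E L‖ - ‖E 0‖|
      ≤ ‖k‖ * ‖Complex.exp (Complex.I * k * L) • E L - E 0‖ := by
        gcongr
        exact abs_norm_sub_norm_le _ _
    _ ≤ M * L * Real.exp (max 1 M * L) * ‖E 0‖ :=
        norm_mul_norm_exp_smul_sub_le hL hk hW hE hE' (by rwa [hsq]) hE'0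

end

/-- Let `0 < m ≤ M`. There is `C > 0` depending only on `m, M` such that
for every `L ∈ [m,M]`, continuous `W` with `‖W‖_∞ ≤ M`, and `z` with `Im z > 0`,
`|√z| ≥ 1`, the solution `E` of `−E'' + W E = z E` with `E(0)=1`, `E'(0) = −i√z`
satisfies `| |E(L)| e^{−L Im √z} − 1 | ≤ C / |√z|`. -/
theorem abs_E_asymptotics
    (m M : ℝ) (hm : 0 < m) (hmM : m ≤ M) :
    ∃ C > (0:ℝ),
      ∀ L ∈ Icc m M, ∀ W : ℝ → ℝ, ContinuousOn W (Icc 0 L) →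
        (∀ x ∈ Icc (0:ℝ) L, |W x| ≤ M) →
        ∀ z : ℂ, 0 < z.im → 1 ≤ ‖z ^ (1/2 : ℂ)‖ →
          ∀ E E' E'' : ℝ → ℂ,
            (∀ x ∈ Icc (0:ℝ) L, HasDerivWithinAt E (E' x) (Icc 0 L) x) →
            (∀ x ∈ Icc (0:ℝ) L, HasDerivWithinAt E' (E'' x) (Icc 0 L) x) →
            ContinuousOn E'' (Icc 0 L) →
            (∀ x ∈ Icc (0:ℝ) L, -E'' x + (W x : ℂ) * E x = z * E x) →
            E 0 = 1 → E' 0 = -Complex.I * z ^ (1/2 : ℂ) →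
            |‖E L‖ * Real.exp (-L * (z ^ (1/2 : ℂ)).im) - 1| ≤
              C / ‖z ^ (1/2 : ℂ)‖ := by
  have hM : 0 < M := hm.trans_le hmM
  refine ⟨M * M * Real.exp (max 1 M * M), by positivity,
    fun L hL W _ hW z hz _ E E' E'' hE hE' _ heq hE0 hE'0 ↦ ?_⟩
  have h := abs_E_asymptotics_general (W := fun x ↦ (W x : ℂ) • .id ℂ ℂ) (hm.le.trans hL.1)
    (by simpa [norm_smul] using hW) hz.le (by rintro rfl; simp at hz) hE hE' heq
    (by simpa [hE0] using hE'0)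
  rw [hE0, norm_one, mul_one] at h
  exact h.trans (by gcongr <;> exact hL.2)
end

section
/- Let L > 0, let W : [0,L] → ℝ be continuous with ‖W‖_∞ = sup_{x∈[0,L]} |W(x)|, and let z ∈ ℂ with Im z > 0 and |√z| ≥ 1. Let E be the twice continuously differentiable solution of −E'' + W E = z E on [0,L] with E(0) = 1 and E'(0) = −i√z. Then |E'(L) + i√z · E(L)| ≤ 3 ‖W‖_∞ e^{‖W‖_∞ L} · sinh(L · Im √z) / Im √z. -/
open Set

open scoped InnerProductSpace

/-!
Put `k = √z`. Because `‖k‖² - k² = -2ik Im k`, the energy `Q = ‖E'‖² + ‖k‖²‖E‖²` satisfies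
`Q' ≤ (2 |Im k| + M / ‖k‖) Q` whenever `‖W‖ ≤ M`, so Grönwall's inequality gives
`‖E x‖ ≤ √2 exp ((Im k + M / (2‖k‖)) x)`. On the other hand `F = E' + ikE` vanishes at `0` and
solves the first-order equation `F' = ikF + WE`; comparing `‖F‖` with a multiple of
`sinh (x Im k) / Im k` yields the bound with the factor `√2 exp (ML / (2‖k‖))`.
-/

lemma cpow_half_im_pos {z : ℂ} (hz : 0 < z.im) : 0 < (z ^ (1 / 2 : ℂ)).im := by
  rw [one_div, Complex.cpow_inv_two_im_eq_sqrt hz.le]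
  have : z.re < ‖z‖ := (le_abs_self _).trans_lt (Complex.abs_re_lt_norm.2 hz.ne')
  exact Real.sqrt_pos.2 (by linarith)

lemma norm_ofReal_norm_sq_sub_sq (k : ℂ) : ‖(‖k‖ : ℂ) ^ 2 - k ^ 2‖ = 2 * |k.im| * ‖k‖ := by
  have factored : (‖k‖ : ℂ) ^ 2 - k ^ 2 = -(k * (k - (starRingEnd ℂ) k)) := by
    linear_combination -Complex.mul_conj' k
  rw [factored, norm_neg, norm_mul, Complex.sub_conj, norm_mul, Complex.norm_I, Complex.norm_real,
    Real.norm_eq_abs, abs_mul, abs_two]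
  ring

section Comparison

variable {a b : ℝ}

lemma hasDerivWithinAt_Ici_of_Icc {V : Type*} [NormedAddCommGroup V] [NormedSpace ℝ V]
    {f : ℝ → V} {f' : V} {x : ℝ} (hf : HasDerivWithinAt f f' (Icc a b) x) (hx : x ∈ Ico a b) :
    HasDerivWithinAt f f' (Ici x) x :=
  hf.mono_of_mem_nhdsWithin (Icc_mem_nhdsGE_of_mem hx)

lemma le_mul_exp_of_deriv_le_mul {f f' : ℝ → ℝ} {K : ℝ}
    (hf : ∀ x ∈ Icc a b, HasDerivWithinAt f (f' x) (Icc a b) x)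
    (bound : ∀ x ∈ Ico a b, f' x ≤ K * f x) {x : ℝ} (hx : x ∈ Icc a b) :
    f x ≤ f a * Real.exp (K * (x - a)) := by
  rw [← gronwallBound_ε0]
  exact le_gronwallBound_of_liminf_deriv_right_le (fun t ht => (hf t ht).continuousWithinAt)
    (fun t ht _ hr => (hasDerivWithinAt_Ici_of_Icc
      (hf t (Ico_subset_Icc_self ht)) ht).liminf_right_slope_le hr)
    le_rfl (fun t ht => by simpa using bound t ht) x hx

/-- The bound on `g` makes `B` a supersolution of `B' = (Re c) B + ‖g‖`. -/
lemma norm_le_of_linear_deriv_of_norm_le {V : Type*} [NormedAddCommGroup V] [NormedSpace ℂ V]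
    {c : ℂ} {f g : ℝ → V} {B B' : ℝ → ℝ}
    (hf : ∀ x ∈ Icc a b, HasDerivWithinAt f (c • f x + g x) (Icc a b) x)
    (ha : ‖f a‖ ≤ B a) (hB : ∀ x, HasDerivAt B (B' x) x)
    (bound : ∀ x ∈ Ico a b, ‖g x‖ ≤ B' x - c.re * B x) {x : ℝ} (hx : x ∈ Icc a b) :
    ‖f x‖ ≤ B x := by
  have norm_exp_smul (t : ℝ) (v : V) : ‖Complex.exp (-c * t) • v‖ = Real.exp (-c.re * t) * ‖v‖ := by
    simp [norm_smul, Complex.norm_exp]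
  have hweighted : ∀ t ∈ Icc a b, HasDerivWithinAt (fun s : ℝ => Complex.exp (-c * s) • f s)
      (Complex.exp (-c * t) • g t) (Icc a b) t := by
    intro t ht
    have hexp : HasDerivAt (fun s : ℝ => Complex.exp (-c * s))
        (Complex.exp (-c * t) * (-c * 1)) t :=
      ((Complex.ofRealCLM.hasDerivAt (x := t)).const_mul (-c)).cexp
    exact (hexp.hasDerivWithinAt.smul (hf t ht)).congr_deriv (by module)
  have hexpB (t : ℝ) : HasDerivAt (fun s => Real.exp (-c.re * s) * B s)
      (Real.exp (-c.re * t) * (B' t - c.re * B t)) t :=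
    (((hasDerivAt_id t).const_mul (-c.re)).exp.mul (hB t)).congr_deriv (by simp only [id]; ring)
  have weighted_bound := image_norm_le_of_norm_deriv_right_le_deriv_boundary
    (fun t ht => (hweighted t ht).continuousWithinAt)
    (fun t ht => hasDerivWithinAt_Ici_of_Icc (hweighted t (Ico_subset_Icc_self ht)) ht)
    (by rw [norm_exp_smul]; gcongr) hexpB
    (fun t ht => by rw [norm_exp_smul]; gcongr; exact bound t ht) hx
  rw [norm_exp_smul] at weighted_bound
  exact le_of_mul_le_mul_left weighted_bound (Real.exp_pos _)

end Comparison

/-- `E` solves the stationary Schrödinger equation `-E'' + W E = z E` on `s`, with first derivative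
`E'`. At the end points of an interval `s` the derivatives are one-sided. -/
structure IsSchrodingerSolutionOn (W : ℝ → ℂ) (z : ℂ) (E E' : ℝ → ℂ) (s : Set ℝ) : Prop where
  hasDerivWithinAt : ∀ x ∈ s, HasDerivWithinAt E (E' x) s x
  hasDerivWithinAt_deriv : ∀ x ∈ s, HasDerivWithinAt E' ((W x - z) * E x) s x

/-- The energy density of a solution of `-E'' + W E = k² E` at `x`, ignoring the potential. It is
conserved when `W = 0` and `k` is real. -/
noncomputable def schrodingerEnergy (k : ℂ) (E E' : ℝ → ℂ) (x : ℝ) : ℝ :=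
  ‖E' x‖ ^ 2 + ‖k‖ ^ 2 * ‖E x‖ ^ 2

lemma two_mul_inner_le_mul_schrodingerEnergy {k w : ℂ} {M : ℝ} (hk : k ≠ 0) (hw : ‖w‖ ≤ M)
    (E E' : ℝ → ℂ) (x : ℝ) :
    2 * ⟪E' x, (w + ((‖k‖ : ℂ) ^ 2 - k ^ 2)) * E x⟫_ℝ ≤
      (2 * |k.im| + M / ‖k‖) * schrodingerEnergy k E E' x := by
  have hM : 0 ≤ M := (norm_nonneg _).trans hw
  have hcoeff : ‖w + ((‖k‖ : ℂ) ^ 2 - k ^ 2)‖ ≤ M + 2 * |k.im| * ‖k‖ :=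
    norm_add_le_of_le hw (norm_ofReal_norm_sq_sub_sq k).le
  calc 2 * ⟪E' x, (w + ((‖k‖ : ℂ) ^ 2 - k ^ 2)) * E x⟫_ℝ
      ≤ 2 * (‖E' x‖ * ((M + 2 * |k.im| * ‖k‖) * ‖E x‖)) := by
        grw [real_inner_le_norm, norm_mul, hcoeff]
    _ = (2 * |k.im| + M / ‖k‖) * (2 * ‖E' x‖ * (‖k‖ * ‖E x‖)) := by
        field_simp
        ring
    _ ≤ (2 * |k.im| + M / ‖k‖) * schrodingerEnergy k E E' x := by
        rw [schrodingerEnergy, ← mul_pow]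
        gcongr
        exact two_mul_le_add_sq _ _

namespace IsSchrodingerSolutionOn

variable {W : ℝ → ℂ} {k : ℂ} {E E' : ℝ → ℂ} {s : Set ℝ} {a b M x : ℝ}

lemma hasDerivWithinAt_energy (hE : IsSchrodingerSolutionOn W (k ^ 2) E E' s) (hx : x ∈ s) :
    HasDerivWithinAt (schrodingerEnergy k E E')
      (2 * ⟪E' x, (W x + ((‖k‖ : ℂ) ^ 2 - k ^ 2)) * E x⟫_ℝ) s x := by
  refine ((hE.hasDerivWithinAt_deriv x hx).norm_sq.add
    ((hE.hasDerivWithinAt x hx).norm_sq.const_mul (‖k‖ ^ 2))).congr_deriv ?_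
  have split : (W x + ((‖k‖ : ℂ) ^ 2 - k ^ 2)) * E x =
      (W x - k ^ 2) * E x + (‖k‖ ^ 2 : ℝ) • E x := by
    rw [Complex.real_smul, Complex.ofReal_pow]
    ring
  rw [split, inner_add_right, real_inner_smul_right, real_inner_comm (E' x) (E x)]
  ring

lemma energy_le (hE : IsSchrodingerSolutionOn W (k ^ 2) E E' (Icc a b)) (hk : k ≠ 0)
    (hW : ∀ t ∈ Icc a b, ‖W t‖ ≤ M) (hx : x ∈ Icc a b) :
    schrodingerEnergy k E E' x ≤
      schrodingerEnergy k E E' a * Real.exp ((2 * |k.im| + M / ‖k‖) * (x - a)) :=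
  le_mul_exp_of_deriv_le_mul (fun _ ht => hE.hasDerivWithinAt_energy ht)
    (fun t ht => two_mul_inner_le_mul_schrodingerEnergy hk (hW t (Ico_subset_Icc_self ht)) E E' t)
    hx

lemma norm_le_of_deriv_left_eq (hE : IsSchrodingerSolutionOn W (k ^ 2) E E' (Icc a b)) (hk : k ≠ 0)
    (hW : ∀ t ∈ Icc a b, ‖W t‖ ≤ M) (ha : E' a = -Complex.I * k * E a) (hx : x ∈ Icc a b) :
    ‖E x‖ ≤ √2 * ‖E a‖ * Real.exp ((|k.im| + M / (2 * ‖k‖)) * (x - a)) := by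
  have energy_left : schrodingerEnergy k E E' a = ‖k‖ ^ 2 * (2 * ‖E a‖ ^ 2) := by
    simp only [schrodingerEnergy, ha, norm_mul, norm_neg, Complex.norm_I]
    ring
  have exp_sq : Real.exp ((2 * |k.im| + M / ‖k‖) * (x - a)) =
      Real.exp ((|k.im| + M / (2 * ‖k‖)) * (x - a)) ^ 2 := by
    rw [← Real.exp_nat_mul]
    congr 1
    push_cast
    field_simp
  have sq_le : ‖k‖ ^ 2 * ‖E x‖ ^ 2 ≤
      ‖k‖ ^ 2 * (√2 * ‖E a‖ * Real.exp ((|k.im| + M / (2 * ‖k‖)) * (x - a))) ^ 2 := calc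
    ‖k‖ ^ 2 * ‖E x‖ ^ 2 ≤ schrodingerEnergy k E E' x := le_add_of_nonneg_left (sq_nonneg _)
    _ ≤ _ := hE.energy_le hk hW hx
    _ = _ := by
        rw [energy_left, exp_sq, mul_pow, mul_pow, Real.sq_sqrt zero_le_two]
        ring
  exact le_of_sq_le_sq (le_of_mul_le_mul_left sq_le (by positivity)) (by positivity)

lemma hasDerivWithinAt_deriv_add (hE : IsSchrodingerSolutionOn W (k ^ 2) E E' s) (hx : x ∈ s) :
    HasDerivWithinAt (fun t => E' t + Complex.I * k * E t)
      ((Complex.I * k) • (E' x + Complex.I * k * E x) + W x * E x) s x := by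
  refine ((hE.hasDerivWithinAt_deriv x hx).add
    ((hE.hasDerivWithinAt x hx).const_mul (Complex.I * k))).congr_deriv ?_
  rw [smul_eq_mul]
  linear_combination -(k ^ 2 * E x) * Complex.I_sq

end IsSchrodingerSolutionOn

theorem derivative_combination_bound_general {W : ℝ → ℂ} {k : ℂ} {E E' : ℝ → ℂ} {a b M : ℝ}
    (hab : a ≤ b) (hW : ∀ x ∈ Icc a b, ‖W x‖ ≤ M) (hk : 0 < k.im)
    (hE : IsSchrodingerSolutionOn W (k ^ 2) E E' (Icc a b))
    (ha : E' a = -Complex.I * k * E a) :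
    ‖E' b + Complex.I * k * E b‖ ≤
      M * (√2 * Real.exp (M * (b - a) / (2 * ‖k‖))) * Real.sinh ((b - a) * k.im) / k.im *
        ‖E a‖ := by
  have hM : 0 ≤ M := (norm_nonneg _).trans (hW a (left_mem_Icc.2 hab))
  have hk0 : k ≠ 0 := by rintro rfl; simp at hk
  set C := M * (√2 * Real.exp (M * (b - a) / (2 * ‖k‖))) with hC
  have hsinh (t : ℝ) : HasDerivAt (fun t => C * Real.sinh ((t - a) * k.im) / k.im * ‖E a‖)
      (C * Real.cosh ((t - a) * k.im) * ‖E a‖) t :=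
    (((((((hasDerivAt_id t).sub_const a).mul_const k.im).sinh).const_mul C).div_const
      k.im).mul_const ‖E a‖).congr_deriv (by simp only [id]; field_simp)
  refine norm_le_of_linear_deriv_of_norm_le
    (B := fun t => C * Real.sinh ((t - a) * k.im) / k.im * ‖E a‖)
    (fun t ht => hE.hasDerivWithinAt_deriv_add ht) (by simp [ha]) hsinh (fun t ht => ?_)
    (right_mem_Icc.2 hab)
  have htI := Ico_subset_Icc_self ht
  calc ‖W t * E t‖
      ≤ M * (√2 * ‖E a‖ * Real.exp ((|k.im| + M / (2 * ‖k‖)) * (t - a))) := by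
        grw [norm_mul, hW t htI, hE.norm_le_of_deriv_left_eq hk0 hW ha htI]
    _ = M * (√2 * Real.exp (M * (t - a) / (2 * ‖k‖))) * Real.exp ((t - a) * k.im) * ‖E a‖ := by
        rw [abs_of_pos hk, add_mul, Real.exp_add]
        ring_nf
    _ ≤ C * Real.exp ((t - a) * k.im) * ‖E a‖ := by
        rw [hC]
        gcongr
        exact htI.2
    _ = C * Real.cosh ((t - a) * k.im) * ‖E a‖ -
          (Complex.I * k).re * (C * Real.sinh ((t - a) * k.im) / k.im * ‖E a‖) := by
        rw [← Real.cosh_add_sinh, Complex.I_mul_re]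
        field_simp
        ring

lemma sqrt_two_mul_exp_div_le {r t : ℝ} (hr : 1 ≤ r) (ht : 0 ≤ t) :
    √2 * Real.exp (t / r) ≤ 3 * Real.exp t := by
  gcongr
  · exact Real.sqrt_le_iff.2 (by norm_num)
  · exact div_le_self ht hr

lemma abs_le_sSup_image_abs {X : Type*} [TopologicalSpace X] {W : X → ℝ} {K : Set X}
    (hK : IsCompact K) (hW : ContinuousOn W K) {x : X} (hx : x ∈ K) :
    |W x| ≤ sSup ((fun x => |W x|) '' K) :=
  le_csSup (hK.bddAbove_image hW.abs) (mem_image_of_mem _ hx)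

/-- Let `E` solve `−E'' + W E = z E` on `[0,L]` with `E(0)=1`,
`E'(0) = −i√z`, where `Im z > 0` and `|√z| ≥ 1`. With `‖W‖_∞ = sup_{[0,L]} |W|`, one has
`|E'(L) + i√z E(L)| ≤ 3 ‖W‖_∞ e^{‖W‖_∞ L} sinh(L Im √z) / Im √z`. -/
theorem derivative_combination_bound
    (L : ℝ) (hL : 0 < L) (W : ℝ → ℝ) (hW : ContinuousOn W (Icc 0 L))
    (Wsup : ℝ) (hWsup : Wsup = sSup ((fun x => |W x|) '' Icc 0 L))
    (z : ℂ) (hz : 0 < z.im) (hz' : 1 ≤ ‖z ^ (1/2 : ℂ)‖)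
    (E E' E'' : ℝ → ℂ)
    (hE' : ∀ x ∈ Icc (0:ℝ) L, HasDerivWithinAt E (E' x) (Icc 0 L) x)
    (hE'' : ∀ x ∈ Icc (0:ℝ) L, HasDerivWithinAt E' (E'' x) (Icc 0 L) x)
    (hE''cont : ContinuousOn E'' (Icc 0 L))
    (hode : ∀ x ∈ Icc (0:ℝ) L, -E'' x + (W x : ℂ) * E x = z * E x)
    (hE0 : E 0 = 1) (hE'0 : E' 0 = -Complex.I * z ^ (1/2 : ℂ)) :
    ‖E' L + Complex.I * z ^ (1/2 : ℂ) * E L‖ ≤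
      3 * Wsup * Real.exp (Wsup * L) *
        Real.sinh (L * (z ^ (1/2 : ℂ)).im) / (z ^ (1/2 : ℂ)).im := by
  have hWbound : ∀ x ∈ Icc (0:ℝ) L, ‖(W x : ℂ)‖ ≤ Wsup := fun x hx => by
    simpa [hWsup] using abs_le_sSup_image_abs isCompact_Icc hW hx
  have hWsup0 : 0 ≤ Wsup := (norm_nonneg _).trans (hWbound 0 (left_mem_Icc.2 hL.le))
  have hsq : (z ^ (1/2 : ℂ)) ^ 2 = z := by simp
  have hsol : IsSchrodingerSolutionOn (fun x => W x) ((z ^ (1/2 : ℂ)) ^ 2) E E' (Icc 0 L) :=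
    ⟨hE', fun x hx => (hE'' x hx).congr_deriv (by rw [hsq]; linear_combination -hode x hx)⟩
  have hk := cpow_half_im_pos hz
  set k := z ^ (1/2 : ℂ)
  refine (derivative_combination_bound_general hL.le hWbound hk hsol (by simp [hE0, hE'0])).trans ?_
  rw [hE0, norm_one, mul_one, sub_zero, mul_comm 3, mul_assoc Wsup 3]
  gcongr Wsup * ?_ * _ / _
  exact sqrt_two_mul_exp_div_le (by linarith) (by positivity)
end

section
/- Let ζ > 0, let W : [0,ζ] → ℝ be continuous, and let z ∈ ℂ. Let C and S be the twice continuously differentiable solutions of −u'' + W u = z u on [0,ζ] with C(0) = 1, C'(0) = 0, S(0) = 0, S'(0) = 1, and set Σ₁ = ∫₀^ζ |S(x)|² dx, Σ₂ = ∫₀^ζ |C(x)|² dx, Σ₃ = ∫₀^ζ C(x)·conj(S(x)) dx. Then Σ₁Σ₂ − |Σ₃|² > 0, and for every twice continuously differentiable solution f of −f'' + W f = z f on [0,ζ], one has f(0) = (Σ₁Σ₂ − |Σ₃|²)⁻¹ ∫₀^ζ ( Σ₁·conj(C(x)) − conj(Σ₃)·conj(S(x)) ) f(x) dx and f'(0)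 = (Σ₁Σ₂ − |Σ₃|²)⁻¹ ∫₀^ζ ( Σ₂·conj(S(x)) − Σ₃·conj(C(x)) ) f(x) dx. -/
open Set

/-!
The Wronskian of two solutions of `u'' = q u` is constant, so every solution is
`f = f(x₀) C + f'(x₀) S`, where `C`, `S` are the fundamental solutions at `x₀`. Its coefficients are
recovered in `L²` by Cramer's rule for the normal equations: the determinant of the Gram matrix of
`C`, `S` is positive by the strict Cauchy-Schwarz inequality, because `C` and `S` are linearly
independent.
-/

open MeasureTheory
open scoped ComplexConjugate InnerProductSpace ENNReal

section InnerProductSpace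

variable {𝕜 E : Type*} [RCLike 𝕜] [NormedAddCommGroup E] [InnerProductSpace 𝕜 E]

lemma norm_inner_sq_lt_of_linearIndependent {x y : E} (h : LinearIndependent 𝕜 ![x, y]) :
    ‖⟪x, y⟫_𝕜‖ ^ 2 < ‖x‖ ^ 2 * ‖y‖ ^ 2 := by
  have hx : x ≠ 0 := h.ne_zero 0
  have hy : y ≠ 0 := h.ne_zero 1
  have hne : ‖⟪x, y⟫_𝕜‖ ≠ ‖x‖ * ‖y‖ := by
    rw [Ne, norm_inner_eq_norm_iff hx hy]
    rintro ⟨r, -, rfl⟩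
    exact (LinearIndependent.pair_iff' hx).1 h r rfl
  rw [← mul_pow]
  gcongr
  exact (norm_inner_le_norm x y).lt_of_ne hne

lemma gram_det_mul_coeff (x y : E) (α β : 𝕜) :
    ((‖x‖ ^ 2 * ‖y‖ ^ 2 - ‖⟪x, y⟫_𝕜‖ ^ 2 : ℝ) : 𝕜) * α =
      ((‖y‖ ^ 2 : ℝ) : 𝕜) * ⟪x, α • x + β • y⟫_𝕜 - ⟪x, y⟫_𝕜 * ⟪y, α • x + β • y⟫_𝕜 := by
  have hconj : ⟪x, y⟫_𝕜 * ⟪y, x⟫_𝕜 = (‖⟪x, y⟫_𝕜‖ : 𝕜) ^ 2 := by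
    rw [← inner_conj_symm y x, RCLike.mul_conj]
  simp only [inner_add_right, inner_smul_right, inner_self_eq_norm_sq_to_K]
  push_cast
  linear_combination α * hconj

lemma coeff_eq_inv_gram_det_mul {x y : E} (h : LinearIndependent 𝕜 ![x, y]) (α β : 𝕜) :
    α = ((‖x‖ ^ 2 * ‖y‖ ^ 2 - ‖⟪x, y⟫_𝕜‖ ^ 2 : ℝ) : 𝕜)⁻¹ *
      (((‖y‖ ^ 2 : ℝ) : 𝕜) * ⟪x, α • x + β • y⟫_𝕜 - ⟪x, y⟫_𝕜 * ⟪y, α • x + β • y⟫_𝕜) := by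
  have hdet : ((‖x‖ ^ 2 * ‖y‖ ^ 2 - ‖⟪x, y⟫_𝕜‖ ^ 2 : ℝ) : 𝕜) ≠ 0 :=
    RCLike.ofReal_ne_zero.2 (sub_pos.2 (norm_inner_sq_lt_of_linearIndependent h)).ne'
  rw [eq_inv_mul_iff_mul_eq₀ hdet, gram_det_mul_coeff]

end InnerProductSpace

section Lp

variable {X 𝕜 E : Type*} [MeasurableSpace X] {μ : Measure X} [NormedAddCommGroup E]

lemma smul_toLp_add_smul_toLp [NormedRing 𝕜] [Module 𝕜 E] [IsBoundedSMul 𝕜 E] {p : ℝ≥0∞}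
    {u v : X → E} (hu : MemLp u p μ) (hv : MemLp v p μ) (α β : 𝕜) :
    α • hu.toLp u + β • hv.toLp v =
      ((hu.const_smul α).add (hv.const_smul β)).toLp (α • u + β • v) := by
  rw [MemLp.toLp_add (hu.const_smul α) (hv.const_smul β), MemLp.toLp_const_smul,
    MemLp.toLp_const_smul]

lemma norm_toLp_two_sq {u : X → E} (hu : MemLp u 2 μ) :
    ‖hu.toLp u‖ ^ 2 = ∫ x, ‖u x‖ ^ 2 ∂μ := by
  have hnonneg : 0 ≤ ∫ x, ‖u x‖ ^ 2 ∂μ := integral_nonneg fun _ => sq_nonneg _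
  rw [Lp.norm_toLp, hu.eLpNorm_eq_integral_rpow_norm two_ne_zero ENNReal.ofNat_ne_top]
  simp only [ENNReal.toReal_ofNat, Real.rpow_two]
  rw [ENNReal.toReal_ofReal (by positivity), ← Real.rpow_natCast, ← Real.rpow_mul hnonneg]
  norm_num

variable [RCLike 𝕜]

lemma inner_toLp_toLp [InnerProductSpace 𝕜 E] {u v : X → E} (hu : MemLp u 2 μ)
    (hv : MemLp v 2 μ) : ⟪hu.toLp u, hv.toLp v⟫_𝕜 = ∫ x, ⟪u x, v x⟫_𝕜 ∂μ := by
  rw [L2.inner_def]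
  refine integral_congr_ae ?_
  filter_upwards [hu.coeFn_toLp, hv.coeFn_toLp] with x hux hvx
  rw [hux, hvx]

lemma integral_conj_sub_conj_mul {u v f : X → 𝕜} (hu : MemLp u 2 μ) (hv : MemLp v 2 μ)
    (hf : MemLp f 2 μ) (k l : 𝕜) :
    ∫ x, (k * conj (u x) - l * conj (v x)) * f x ∂μ =
      k * ⟪hu.toLp u, hf.toLp f⟫_𝕜 - l * ⟪hv.toLp v, hf.toLp f⟫_𝕜 := by
  have integrable_mul_conj {w : X → 𝕜} (hw : MemLp w 2 μ) :
      Integrable (fun x => f x * conj (w x)) μ :=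
    hf.integrable_mul hw.star
  simp only [inner_toLp_toLp, RCLike.inner_apply]
  rw [← integral_const_mul, ← integral_const_mul,
    ← integral_sub ((integrable_mul_conj hu).const_mul k) ((integrable_mul_conj hv).const_mul l)]
  congr 1 with x
  ring

end Lp

lemma memLp_restrict_of_continuousOn {X E : Type*} [TopologicalSpace X] [T2Space X]
    [MeasurableSpace X] [OpensMeasurableSpace X] {μ : Measure X} [IsFiniteMeasureOnCompacts μ]
    [NormedAddCommGroup E] {K : Set X} {u : X → E} (hK : IsCompact K)
    (hu : ContinuousOn u K) (p : ℝ≥0∞) : MemLp u p (μ.restrict K) := by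
  have : IsFiniteMeasure (μ.restrict K) := isFiniteMeasure_restrict.2 hK.measure_lt_top.ne
  obtain ⟨M, hM⟩ := hK.exists_bound_of_continuousOn hu
  exact MemLp.of_bound (hu.aestronglyMeasurable_of_isCompact hK hK.measurableSet) M
    (ae_restrict_of_forall_mem hK.measurableSet hM)

lemma intervalIntegral_eq_integral_Icc {E : Type*} [NormedAddCommGroup E] [NormedSpace ℝ E]
    {a b : ℝ} (hab : a ≤ b) (f : ℝ → E) : ∫ x in a..b, f x = ∫ x in Icc a b, f x := by
  rw [intervalIntegral.integral_of_le hab, integral_Icc_eq_integral_Ioc]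

section SchrodingerEquation

variable {𝕜 : Type*} [RCLike 𝕜] {q u u' v v' C C' S S' : ℝ → 𝕜} {s : Set ℝ} {x₀ : ℝ}

/-- `u` is a solution on `s` of `u'' = q u`, with first derivative `u'`. The stationary Schrödinger
equation `-u'' + W u = z u` is the case `q = W - z`. -/
structure IsSchrodingerSolutionOn_s12 (q u u' : ℝ → 𝕜) (s : Set ℝ) : Prop where
  hasDerivWithinAt : ∀ x ∈ s, HasDerivWithinAt u (u' x) s x
  hasDerivWithinAt_deriv : ∀ x ∈ s, HasDerivWithinAt u' (q x * u x) s x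

/-- `C` and `S` are the fundamental (cosine-like and sine-like) solutions on `s` of `u'' = q u`,
normalized at the base point `x₀`. -/
structure IsFundamentalPairOn (q C C' S S' : ℝ → 𝕜) (s : Set ℝ) (x₀ : ℝ) : Prop where
  left : IsSchrodingerSolutionOn_s12 q C C' s
  right : IsSchrodingerSolutionOn_s12 q S S' s
  left_base : C x₀ = 1
  left_deriv_base : C' x₀ = 0
  right_base : S x₀ = 0
  right_deriv_base : S' x₀ = 1

namespace IsSchrodingerSolutionOn_s12

lemma continuousOn (hu : IsSchrodingerSolutionOn_s12 q u u' s) : ContinuousOn u s :=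
  fun x hx => (hu.hasDerivWithinAt x hx).continuousWithinAt

lemma of_neg_add_mul_eq_mul {W u'' : ℝ → 𝕜} {z : 𝕜}
    (hu' : ∀ x ∈ s, HasDerivWithinAt u (u' x) s x)
    (hu'' : ∀ x ∈ s, HasDerivWithinAt u' (u'' x) s x)
    (hode : ∀ x ∈ s, -u'' x + W x * u x = z * u x) :
    IsSchrodingerSolutionOn_s12 (fun x => W x - z) u u' s where
  hasDerivWithinAt := hu'
  hasDerivWithinAt_deriv x hx :=
    (hu'' x hx).congr_deriv (by linear_combination -hode x hx)

lemma wronskian_eq (hu : IsSchrodingerSolutionOn_s12 q u u' s) (hv : IsSchrodingerSolutionOn_s12 q v v' s)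
    (hs : Convex ℝ s) {x y : ℝ} (hx : x ∈ s) (hy : y ∈ s) :
    u x * v' x - u' x * v x = u y * v' y - u' y * v y := by
  have hderiv : ∀ t ∈ s, HasDerivWithinAt (fun t => u t * v' t - u' t * v t) 0 s t := fun t ht =>
    (((hu.hasDerivWithinAt t ht).mul (hv.hasDerivWithinAt_deriv t ht)).sub
      ((hu.hasDerivWithinAt_deriv t ht).mul (hv.hasDerivWithinAt t ht))).congr_deriv (by ring)
  have hle := hs.norm_image_sub_le_of_norm_hasDerivWithin_le hderiv
    (fun _ _ => norm_zero.le) hy hx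
  rwa [zero_mul, norm_le_zero_iff, sub_eq_zero] at hle

end IsSchrodingerSolutionOn_s12

namespace IsFundamentalPairOn

lemma eq_base_mul_add_base_deriv_mul (h : IsFundamentalPairOn q C C' S S' s x₀)
    (hu : IsSchrodingerSolutionOn_s12 q u u' s) (hs : Convex ℝ s) (hx₀ : x₀ ∈ s) {x : ℝ}
    (hx : x ∈ s) : u x = u x₀ * C x + u' x₀ * S x := by
  have hCS := h.left.wronskian_eq h.right hs hx hx₀
  have huC := hu.wronskian_eq h.left hs hx hx₀
  have huS := hu.wronskian_eq h.right hs hx hx₀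
  simp only [h.left_base, h.left_deriv_base, h.right_base, h.right_deriv_base] at hCS huC huS
  linear_combination C x * huS - S x * huC - u x * hCS

lemma coeff_eq_zero_of_eqOn_zero (h : IsFundamentalPairOn q C C' S S' s x₀)
    (hs : UniqueDiffWithinAt ℝ s x₀) (hx₀ : x₀ ∈ s) {α β : 𝕜}
    (hzero : EqOn (α • C + β • S) 0 s) : α = 0 ∧ β = 0 := by
  have hderiv : HasDerivWithinAt (α • C + β • S) (α • C' x₀ + β • S' x₀) s x₀ :=
    ((h.left.hasDerivWithinAt x₀ hx₀).const_smul α).add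
      ((h.right.hasDerivWithinAt x₀ hx₀).const_smul β)
  have hderiv_zero : HasDerivWithinAt (α • C + β • S) 0 s x₀ :=
    (hasDerivWithinAt_const x₀ s (0 : 𝕜)).congr hzero (hzero hx₀)
  constructor
  · simpa [h.left_base, h.right_base] using hzero hx₀
  · simpa [h.left_deriv_base, h.right_deriv_base] using hs.eq_deriv _ hderiv hderiv_zero

lemma linearIndependent_toLp {a b : ℝ} (h : IsFundamentalPairOn q C C' S S' (Icc a b) x₀)
    (hab : a < b) (hx₀ : x₀ ∈ Icc a b) {p : ℝ≥0∞} (hC : MemLp C p (volume.restrict (Icc a b)))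
    (hS : MemLp S p (volume.restrict (Icc a b))) :
    LinearIndependent 𝕜 ![hC.toLp C, hS.toLp S] := by
  refine LinearIndependent.pair_iff.2 fun α β hzero => ?_
  have hae : α • C + β • S =ᵐ[volume.restrict (Icc a b)] 0 := by
    rw [smul_toLp_add_smul_toLp, Lp.eq_zero_iff_ae_eq_zero] at hzero
    exact (MemLp.coeFn_toLp _).symm.trans hzero
  have hcont : ContinuousOn (α • C + β • S) (Icc a b) :=
    (h.left.continuousOn.const_smul α).add (h.right.continuousOn.const_smul β)
  exact h.coeff_eq_zero_of_eqOn_zero (uniqueDiffOn_Icc hab x₀ hx₀) hx₀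
    (Measure.eqOn_Icc_of_ae_eq volume hab.ne hae hcont continuousOn_const)

lemma toLp_eq {a b : ℝ} (h : IsFundamentalPairOn q C C' S S' (Icc a b) x₀)
    (hu : IsSchrodingerSolutionOn_s12 q u u' (Icc a b)) (hx₀ : x₀ ∈ Icc a b) {p : ℝ≥0∞}
    (hC : MemLp C p (volume.restrict (Icc a b))) (hS : MemLp S p (volume.restrict (Icc a b)))
    (hup : MemLp u p (volume.restrict (Icc a b))) :
    hup.toLp u = u x₀ • hC.toLp C + u' x₀ • hS.toLp S := by
  rw [smul_toLp_add_smul_toLp, MemLp.toLp_eq_toLp_iff]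
  exact ae_restrict_of_forall_mem measurableSet_Icc fun x hx =>
    h.eq_base_mul_add_base_deriv_mul hu (convex_Icc a b) hx₀ hx

end IsFundamentalPairOn

theorem boundary_data_from_L2_pairings_general {a b : ℝ} (hab : a < b) (hx₀ : x₀ ∈ Icc a b)
    (h : IsFundamentalPairOn q C C' S S' (Icc a b) x₀) {Sig1 Sig2 : ℝ} {Sig3 : 𝕜}
    (hSig1 : Sig1 = ∫ x in a..b, ‖S x‖ ^ 2) (hSig2 : Sig2 = ∫ x in a..b, ‖C x‖ ^ 2)
    (hSig3 : Sig3 = ∫ x in a..b, C x * conj (S x)) :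
    0 < Sig1 * Sig2 - ‖Sig3‖ ^ 2 ∧
    ∀ f f' : ℝ → 𝕜, IsSchrodingerSolutionOn_s12 q f f' (Icc a b) →
      f x₀ = ((Sig1 * Sig2 - ‖Sig3‖ ^ 2 : ℝ) : 𝕜)⁻¹ *
          ∫ x in a..b, ((Sig1 : 𝕜) * conj (C x) - conj Sig3 * conj (S x)) * f x ∧
      f' x₀ = ((Sig1 * Sig2 - ‖Sig3‖ ^ 2 : ℝ) : 𝕜)⁻¹ *
          ∫ x in a..b, ((Sig2 : 𝕜) * conj (S x) - Sig3 * conj (C x)) * f x := by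
  have memLp {w : ℝ → 𝕜} (hw : ContinuousOn w (Icc a b)) : MemLp w 2 (volume.restrict (Icc a b)) :=
    memLp_restrict_of_continuousOn isCompact_Icc hw 2
  have hC := memLp h.left.continuousOn
  have hS := memLp h.right.continuousOn
  have hSC : LinearIndependent 𝕜 ![hS.toLp S, hC.toLp C] :=
    LinearIndependent.pair_symm_iff.1 (h.linearIndependent_toLp hab hx₀ hC hS)
  simp only [intervalIntegral_eq_integral_Icc hab.le] at hSig1 hSig2 hSig3 ⊢
  rw [← norm_toLp_two_sq hS] at hSig1
  rw [← norm_toLp_two_sq hC] at hSig2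
  simp only [← RCLike.inner_apply] at hSig3
  rw [← inner_toLp_toLp hS hC] at hSig3
  subst hSig1 hSig2 hSig3
  refine ⟨sub_pos.2 (norm_inner_sq_lt_of_linearIndependent hSC), fun f f' hf => ?_⟩
  have hf2 := memLp hf.continuousOn
  rw [integral_conj_sub_conj_mul hC hS hf2, integral_conj_sub_conj_mul hS hC hf2, inner_conj_symm,
    h.toLp_eq hf hx₀ hC hS hf2]
  constructor
  · rw [mul_comm (‖hS.toLp S‖ ^ 2), norm_inner_symm]
    exact coeff_eq_inv_gram_det_mul (LinearIndependent.pair_symm_iff.1 hSC) _ _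
  · rw [add_comm]
    exact coeff_eq_inv_gram_det_mul hSC _ _

end SchrodingerEquation

/-- Let `C, S` be the fundamental solutions of `−u'' + W u = z u` on
`[0,ζ]` with `C(0)=1, C'(0)=0, S(0)=0, S'(0)=1`, and set
`Sig1 = ∫₀^ζ |S|², Sig2 = ∫₀^ζ |C|², Sig3 = ∫₀^ζ C·conj S`. Then `Sig1Sig2 − |Sig3|² > 0`, and every
solution `f` of the same equation satisfies the two displayed reconstruction formulas for
`f(0)` and `f'(0)`. -/
theorem boundary_data_from_L2_pairings
    (ζ : ℝ) (hζ : 0 < ζ) (W : ℝ → ℝ) (hW : ContinuousOn W (Icc 0 ζ)) (z : ℂ)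
    (Cf Cf' Cf'' Sf Sf' Sf'' : ℝ → ℂ)
    (hCf' : ∀ x ∈ Icc (0:ℝ) ζ, HasDerivWithinAt Cf (Cf' x) (Icc 0 ζ) x)
    (hCf'' : ∀ x ∈ Icc (0:ℝ) ζ, HasDerivWithinAt Cf' (Cf'' x) (Icc 0 ζ) x)
    (hCcont : ContinuousOn Cf'' (Icc 0 ζ))
    (hCode : ∀ x ∈ Icc (0:ℝ) ζ, -Cf'' x + (W x : ℂ) * Cf x = z * Cf x)
    (hC0 : Cf 0 = 1) (hC'0 : Cf' 0 = 0)
    (hSf' : ∀ x ∈ Icc (0:ℝ) ζ, HasDerivWithinAt Sf (Sf' x) (Icc 0 ζ) x)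
    (hSf'' : ∀ x ∈ Icc (0:ℝ) ζ, HasDerivWithinAt Sf' (Sf'' x) (Icc 0 ζ) x)
    (hScont : ContinuousOn Sf'' (Icc 0 ζ))
    (hSode : ∀ x ∈ Icc (0:ℝ) ζ, -Sf'' x + (W x : ℂ) * Sf x = z * Sf x)
    (hS0 : Sf 0 = 0) (hS'0 : Sf' 0 = 1)
    (Sig1 Sig2 : ℝ) (Sig3 : ℂ)
    (hSig1 : Sig1 = ∫ x in (0:ℝ)..ζ, ‖Sf x‖ ^ 2)
    (hSig2 : Sig2 = ∫ x in (0:ℝ)..ζ, ‖Cf x‖ ^ 2)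
    (hSig3 : Sig3 = ∫ x in (0:ℝ)..ζ, Cf x * starRingEnd ℂ (Sf x)) :
    0 < Sig1 * Sig2 - ‖Sig3‖ ^ 2 ∧
    ∀ f f' f'' : ℝ → ℂ,
      (∀ x ∈ Icc (0:ℝ) ζ, HasDerivWithinAt f (f' x) (Icc 0 ζ) x) →
      (∀ x ∈ Icc (0:ℝ) ζ, HasDerivWithinAt f' (f'' x) (Icc 0 ζ) x) →
      ContinuousOn f'' (Icc 0 ζ) →
      (∀ x ∈ Icc (0:ℝ) ζ, -f'' x + (W x : ℂ) * f x = z * f x) →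
      f 0 = ((Sig1 * Sig2 - ‖Sig3‖ ^ 2 : ℝ) : ℂ)⁻¹ *
          ∫ x in (0:ℝ)..ζ,
            ((Sig1 : ℂ) * starRingEnd ℂ (Cf x) - starRingEnd ℂ Sig3 * starRingEnd ℂ (Sf x)) *
              f x ∧
      f' 0 = ((Sig1 * Sig2 - ‖Sig3‖ ^ 2 : ℝ) : ℂ)⁻¹ *
          ∫ x in (0:ℝ)..ζ,
            ((Sig2 : ℂ) * starRingEnd ℂ (Sf x) - Sig3 * starRingEnd ℂ (Cf x)) * f x := by
  obtain ⟨hpos, hrec⟩ := boundary_data_from_L2_pairings_general hζ (left_mem_Icc.2 hζ.le)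
    ⟨.of_neg_add_mul_eq_mul hCf' hCf'' hCode, .of_neg_add_mul_eq_mul hSf' hSf'' hSode,
      hC0, hC'0, hS0, hS'0⟩ hSig1 hSig2 hSig3
  exact ⟨hpos, fun f f' _ hf' hf'' _ hf => hrec f f' (.of_neg_add_mul_eq_mul hf' hf'' hf)⟩
end

section
/- Let a > 0 and let χ : ℝ → ℝ be smooth with compact support contained in (−a, a). Define χ̃(x + iy) = χ(x) + i y χ'(x) − (y²/2) χ''(x), and for ε ∈ (0,1], λ ∈ ℝ, x ∈ ℝ set f_ε(λ, x) = (1 + x(λ + iε)) · (χ̃(λ + iε) − χ(λ)) / (x − λ − iε). Then there exists a constant C > 0, depending only on a and χ, such that for every x ∈ ℝ and every ε ∈ (0, 1]: | ∫_{−a}^{a} f_ε(λ, x) dλ | ≤ C √ε. -/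
open Set Real

/-!
With `z = t + iε`, the kernel `(1 + xz)/(x - z) = z + (1 + z²)/(x - z)` is only as singular as
`1/|x - z|`, while `χ̃(z) - χ(t)` gains a factor `ε`. By the arithmetic-geometric mean inequality,
`ε/|x - z|` is at most `√ε (1 + P)`, where `P = ε/|x - z|²` is the Poisson kernel of the upper
half-plane. Integrating `P` along the horizontal line gives at most `π`, whatever `x` and `ε` are.
-/

section Kernels

/-- The kernel of the Herglotz representation
`F(z) = cz + d + ∫ (1 + xz)/(x - z) dμ(x)`. -/
noncomputable def herglotzKernel (x : ℝ) (z : ℂ) : ℂ :=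
  (1 + x * z) / (x - z)

/-- The Poisson kernel of the upper half-plane, with pole at the real point `x`, normalised to have
total mass `π` on each horizontal line. -/
noncomputable def halfPlanePoissonKernel (x : ℝ) (z : ℂ) : ℝ :=
  z.im / ‖(x : ℂ) - z‖ ^ 2

variable (x : ℝ) {z : ℂ}

lemma herglotzKernel_eq_add_div (hz : (x : ℂ) ≠ z) :
    herglotzKernel x z = z + (1 + z ^ 2) / (x - z) := by
  have : (x : ℂ) - z ≠ 0 := sub_ne_zero.2 hz
  rw [herglotzKernel]
  field_simp
  ring

lemma norm_herglotzKernel_le (hz : (x : ℂ) ≠ z) :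
    ‖herglotzKernel x z‖ ≤ ‖z‖ + (1 + ‖z‖ ^ 2) / ‖(x : ℂ) - z‖ := by
  have h_num : ‖1 + z ^ 2‖ ≤ 1 + ‖z‖ ^ 2 := (norm_add_le _ _).trans_eq (by rw [norm_one, norm_pow])
  rw [herglotzKernel_eq_add_div x hz]
  refine (norm_add_le _ _).trans ?_
  rw [norm_div]
  gcongr

lemma div_le_sqrt_mul_one_add_div_sq {ε : ℝ} (hε : 0 ≤ ε) (r : ℝ) :
    ε / r ≤ √ε * (1 + ε / r ^ 2) := by
  have amgm : √ε / r ≤ 1 + (√ε / r) ^ 2 := by nlinarith [sq_nonneg (√ε / r - 1)]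
  calc ε / r = √ε * (√ε / r) := by rw [← mul_div_assoc, mul_self_sqrt hε]
    _ ≤ √ε * (1 + (√ε / r) ^ 2) := by gcongr
    _ = √ε * (1 + ε / r ^ 2) := by rw [div_pow, sq_sqrt hε]

lemma halfPlanePoissonKernel_nonneg (hz : 0 ≤ z.im) : 0 ≤ halfPlanePoissonKernel x z :=
  div_nonneg hz (sq_nonneg _)

lemma im_mul_norm_herglotzKernel_le (hz : 0 < z.im) :
    z.im * ‖herglotzKernel x z‖ ≤
      (√z.im * ‖z‖ + (1 + ‖z‖ ^ 2)) * (√z.im * (1 + halfPlanePoissonKernel x z)) := by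
  have hxz : (x : ℂ) ≠ z := fun h => hz.ne (by rw [← h, Complex.ofReal_im])
  have h_regular : z.im ≤ √z.im * (√z.im * (1 + halfPlanePoissonKernel x z)) := by
    rw [← mul_assoc, mul_self_sqrt hz.le]
    exact le_mul_of_one_le_right hz.le
      (le_add_of_nonneg_right (halfPlanePoissonKernel_nonneg x hz.le))
  have h_singular : z.im / ‖(x : ℂ) - z‖ ≤ √z.im * (1 + halfPlanePoissonKernel x z) :=
    div_le_sqrt_mul_one_add_div_sq hz.le _
  calc z.im * ‖herglotzKernel x z‖
      ≤ z.im * (‖z‖ + (1 + ‖z‖ ^ 2) / ‖(x : ℂ) - z‖) := by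
        gcongr
        exact norm_herglotzKernel_le x hxz
    _ = z.im * ‖z‖ + (1 + ‖z‖ ^ 2) * (z.im / ‖(x : ℂ) - z‖) := by ring
    _ ≤ √z.im * (√z.im * (1 + halfPlanePoissonKernel x z)) * ‖z‖
          + (1 + ‖z‖ ^ 2) * (√z.im * (1 + halfPlanePoissonKernel x z)) := by gcongr
    _ = _ := by ring

end Kernels

section PoissonIntegral

variable (x ε a b : ℝ)

lemma halfPlanePoissonKernel_add_mul_I (t : ℝ) :
    halfPlanePoissonKernel x (t + ε * Complex.I) = ε / (ε ^ 2 + (x - t) ^ 2) := by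
  have h : (x : ℂ) - (t + ε * Complex.I) = (x - t : ℝ) + (-ε : ℝ) * Complex.I := by
    push_cast
    ring
  rw [halfPlanePoissonKernel, h, Complex.sq_norm, Complex.normSq_add_mul_I, neg_sq,
    add_comm (ε ^ 2)]
  simp

lemma integral_halfPlanePoissonKernel_add_mul_I :
    ∫ t in a..b, halfPlanePoissonKernel x (t + ε * Complex.I) =
      arctan ((x - a) / ε) - arctan ((x - b) / ε) := by
  simp only [halfPlanePoissonKernel_add_mul_I]
  rw [intervalIntegral.integral_comp_sub_left fun s => ε / (ε ^ 2 + s ^ 2), integral_div_sq_add_sq]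

lemma abs_integral_halfPlanePoissonKernel_add_mul_I_le :
    |∫ t in a..b, halfPlanePoissonKernel x (t + ε * Complex.I)| ≤ π := by
  rw [integral_halfPlanePoissonKernel_add_mul_I, abs_le]
  have ha := arctan_mem_Ioo ((x - a) / ε)
  have hb := arctan_mem_Ioo ((x - b) / ε)
  constructor <;> linarith [ha.1, ha.2, hb.1, hb.2]

variable {x ε a b}

lemma continuous_halfPlanePoissonKernel_add_mul_I (hε : ε ≠ 0) :
    Continuous fun t : ℝ => halfPlanePoissonKernel x (t + ε * Complex.I) := by
  simp only [halfPlanePoissonKernel_add_mul_I]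
  exact continuous_const.div (by fun_prop) fun t => by positivity

lemma norm_integral_le_of_norm_le_one_add_halfPlanePoissonKernel
    {E : Type*} [NormedAddCommGroup E] [NormedSpace ℝ E] {f : ℝ → E} {C : ℝ}
    (hε : ε ≠ 0) (hC : 0 ≤ C)
    (hf : ∀ t ∈ uIoc a b, ‖f t‖ ≤ C * (1 + halfPlanePoissonKernel x (t + ε * Complex.I))) :
    ‖∫ t in a..b, f t‖ ≤ C * (|b - a| + π) := by
  have hP : IntervalIntegrable (fun t : ℝ => halfPlanePoissonKernel x (t + ε * Complex.I))
      MeasureTheory.volume a b :=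
    (continuous_halfPlanePoissonKernel_add_mul_I hε).intervalIntegrable a b
  calc ‖∫ t in a..b, f t‖
      ≤ |∫ t in a..b, C * (1 + halfPlanePoissonKernel x (t + ε * Complex.I))| :=
        intervalIntegral.norm_integral_le_abs_of_norm_le
          ((MeasureTheory.ae_restrict_mem measurableSet_uIoc).mono hf)
          ((intervalIntegrable_const.add hP).const_mul C)
    _ = C * |(b - a) + ∫ t in a..b, halfPlanePoissonKernel x (t + ε * Complex.I)| := by
        rw [intervalIntegral.integral_const_mul,
          intervalIntegral.integral_add intervalIntegrable_const hP,
          intervalIntegral.integral_const, smul_eq_mul, mul_one, abs_mul, abs_of_nonneg hC]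
    _ ≤ C * (|b - a| + π) := by
        gcongr
        exact (abs_add_le _ _).trans
          (add_le_add_right (abs_integral_halfPlanePoissonKernel_add_mul_I_le x ε a b) _)

end PoissonIntegral

section AlmostAnalyticExtension

/-- The almost analytic extension `χ̃(x + iy) = χ(x) + iyχ'(x) - (y²/2)χ''(x)` of order two of a
function `χ` on the real line. -/
noncomputable def almostAnalyticExtension (χ : ℝ → ℝ) (z : ℂ) : ℂ :=
  (χ z.re : ℂ) + Complex.I * (z.im : ℂ) * (Complex.ofReal (deriv χ z.re))
    - ((z.im ^ 2 / 2 : ℝ) : ℂ) * (Complex.ofReal (deriv (deriv χ) z.re))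

lemma norm_almostAnalyticExtension_sub_le (χ : ℝ → ℝ) (z : ℂ) :
    ‖almostAnalyticExtension χ z - χ z.re‖ ≤
      |z.im| * (|deriv χ z.re| + |z.im| / 2 * |deriv (deriv χ) z.re|) := by
  rw [almostAnalyticExtension, add_sub_assoc, add_sub_cancel_left]
  refine (norm_sub_le _ _).trans_eq ?_
  simp only [norm_mul, Complex.norm_I, Complex.norm_real, norm_eq_abs, abs_div, abs_pow,
    abs_two]
  ring

lemma exists_norm_herglotzKernel_mul_almostAnalyticExtension_sub_le
    {χ : ℝ → ℝ} (hχ : ContDiff ℝ 2 χ) {K : Set ℂ} (hK : IsCompact K) :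
    ∃ C > 0, ∀ x : ℝ, ∀ z ∈ K, 0 < z.im →
      ‖herglotzKernel x z * (almostAnalyticExtension χ z - χ z.re)‖ ≤
        C * √z.im * (1 + halfPlanePoissonKernel x z) := by
  let A : ℂ → ℝ := fun z => √z.im * ‖z‖ + (1 + ‖z‖ ^ 2)
  let D : ℂ → ℝ := fun z => |deriv χ z.re| + |z.im| / 2 * |deriv (deriv χ) z.re|
  have hχ' : ContDiff ℝ 1 (deriv χ) := hχ.deriv'
  have hAD : Continuous fun z => A z * D z := by fun_prop
  obtain ⟨C, hC0, hC⟩ := (hK.image hAD).isBounded.exists_pos_norm_le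
  refine ⟨C, hC0, fun x z hzK hz => ?_⟩
  have hP := halfPlanePoissonKernel_nonneg x hz.le
  calc ‖herglotzKernel x z * (almostAnalyticExtension χ z - χ z.re)‖
      ≤ ‖herglotzKernel x z‖ * (z.im * D z) := by
        rw [norm_mul]
        gcongr
        simpa only [D, abs_of_pos hz] using norm_almostAnalyticExtension_sub_le χ z
    _ = z.im * ‖herglotzKernel x z‖ * D z := by ring
    _ ≤ A z * (√z.im * (1 + halfPlanePoissonKernel x z)) * D z := by
        gcongr ?_ * _
        exact im_mul_norm_herglotzKernel_le x hz
    _ = A z * D z * (√z.im * (1 + halfPlanePoissonKernel x z)) := by ring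
    _ ≤ C * (√z.im * (1 + halfPlanePoissonKernel x z)) := by
        gcongr
        exact (le_abs_self _).trans (hC _ (mem_image_of_mem _ hzK))
    _ = C * √z.im * (1 + halfPlanePoissonKernel x z) := by ring

end AlmostAnalyticExtension

theorem f_eps_integral_bound_general (a b : ℝ) {χ : ℝ → ℝ} (hχ : ContDiff ℝ 2 χ) :
    ∃ C > 0, ∀ x ε : ℝ, 0 < ε → ε ≤ 1 →
      ‖∫ t in a..b, herglotzKernel x (t + ε * Complex.I) *
        (almostAnalyticExtension χ (t + ε * Complex.I) - χ t)‖ ≤ C * √ε := by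
  have hK : IsCompact (uIcc a b ×ℂ Icc 0 1) := Metric.isCompact_of_isClosed_isBounded
    (isClosed_Icc.reProdIm isClosed_Icc)
    (isCompact_uIcc.isBounded.reProdIm isCompact_Icc.isBounded)
  obtain ⟨C, hC0, hC⟩ := exists_norm_herglotzKernel_mul_almostAnalyticExtension_sub_le hχ hK
  refine ⟨C * (|b - a| + π), by positivity, fun x ε hε hε1 => ?_⟩
  have h_pointwise : ∀ t ∈ uIoc a b, ‖herglotzKernel x (t + ε * Complex.I) *
      (almostAnalyticExtension χ (t + ε * Complex.I) - χ t)‖ ≤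
        C * √ε * (1 + halfPlanePoissonKernel x (t + ε * Complex.I)) := fun t ht => by
    have h_re : ((t : ℂ) + ε * Complex.I).re = t := by simp
    have h_im : ((t : ℂ) + ε * Complex.I).im = ε := by simp
    have h_mem : (t : ℂ) + ε * Complex.I ∈ uIcc a b ×ℂ Icc 0 1 := by
      rw [Complex.mem_reProdIm, h_re, h_im]
      exact ⟨uIoc_subset_uIcc ht, hε.le, hε1⟩
    simpa only [h_re, h_im] using hC x _ h_mem (h_im.symm ▸ hε)
  exact (norm_integral_le_of_norm_le_one_add_halfPlanePoissonKernel hε.ne' (by positivity)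
    h_pointwise).trans_eq (by ring)

/-- Let `χ ∈ C_c^∞(ℝ)` with support in `(−a,a)` and almost analytic
extension `χ̃(x+iy) = χ(x) + iyχ'(x) − (y²/2)χ''(x)`. For `ε ∈ (0,1]` and `x, λ ∈ ℝ` set
`f_ε(λ,x) = (1 + x(λ+iε))(χ̃(λ+iε) − χ(λ))/(x − λ − iε)`. Then there is `C > 0`
(depending only on `a, χ`) with `|∫_{−a}^{a} f_ε(λ,x) dλ| ≤ C√ε` for all `x` and all
`ε ∈ (0,1]`. -/
theorem f_eps_integral_bound
    (a : ℝ) (ha : 0 < a)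
    (χ : ℝ → ℝ) (hχ : ContDiff ℝ (⊤ : ℕ∞) χ) (hsupp : Function.support χ ⊆ Ioo (-a) a)
    (χt : ℂ → ℂ)
    (hχt : ∀ w : ℂ, χt w = (χ w.re : ℂ) + Complex.I * (w.im : ℂ) * (Complex.ofReal (deriv χ w.re))
        - ((w.im ^ 2 / 2 : ℝ) : ℂ) * (Complex.ofReal (deriv (deriv χ) w.re))) :
    ∃ C > (0:ℝ), ∀ x : ℝ, ∀ ε : ℝ, 0 < ε → ε ≤ 1 →
      norm
        (∫ t in (-a)..a,
          (1 + (x : ℂ) * ((t : ℂ) + (ε : ℂ) * Complex.I)) *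
            (χt ((t : ℂ) + (ε : ℂ) * Complex.I) - (χ t : ℂ)) /
              ((x : ℂ) - (t : ℂ) - (ε : ℂ) * Complex.I)) ≤ C * Real.sqrt ε := by
  simpa only [herglotzKernel, funext hχt, almostAnalyticExtension, div_mul_eq_mul_div, sub_sub]
    using f_eps_integral_bound_general (-a) a (contDiff_infty.1 hχ 2)
end
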